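/- Let t > 0 and let μ be a t-uniformly log-concave probability measure on ℝⁿ. Then C_P(μ) ≤ √( ‖Cov(μ)‖_op / t ) ≤ 1/t, where ‖Cov(μ)‖_op is the operator norm of the covariance matrix of μ. -/

import Mathlib

open MeasureTheory Real
open scoped ENNReal RealInnerProductSpace

noncomputable section

abbrev Euc (n : ℕ) := EuclideanSpace ℝ (Fin n)

/-- A nonnegative function `g` is log-concave: `g(ax+by) ≥ g(x)^a g(y)^b`. -/
def IsLogConcaveFun {n : ℕ} (g : Euc n → ℝ) : Prop :=
  (∀ x, 0 ≤ g x) ∧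
  ∀ x y : Euc n, ∀ a b : ℝ, 0 ≤ a → 0 ≤ b → a + b = 1 →
    g x ^ a * g y ^ b ≤ g (a • x + b • y)

def IsLogConcaveMeasure {n : ℕ} (μ : Measure (Euc n)) : Prop :=
  ∃ ρ : Euc n → ℝ, Measurable ρ ∧ IsLogConcaveFun ρ ∧
    μ = volume.withDensity (fun x => ENNReal.ofReal (ρ x))

def poincareSet {n : ℕ} (μ : Measure (Euc n)) : Set ℝ :=
  {C : ℝ | 0 ≤ C ∧ ∀ f : Euc n → ℝ, LocallyLipschitz f →
    Integrable (fun x => ‖gradient f x‖ ^ 2) μ →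
    ∫ x, f x ^ 2 ∂μ - (∫ x, f x ∂μ) ^ 2 ≤ C * ∫ x, ‖gradient f x‖ ^ 2 ∂μ}

def poincareConst {n : ℕ} (μ : Measure (Euc n)) : ℝ := sInf (poincareSet μ)

def covMatrix {n : ℕ} (μ : Measure (Euc n)) : Matrix (Fin n) (Fin n) ℝ :=
  Matrix.of fun i j => ∫ x, x i * x j ∂μ - (∫ x, x i ∂μ) * (∫ x, x j ∂μ)

def opNorm {n : ℕ} (M : Matrix (Fin n) (Fin n) ℝ) : ℝ :=
  ‖Matrix.toEuclideanCLM (𝕜 := ℝ) M‖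

def IsIsotropic {n : ℕ} (μ : Measure (Euc n)) : Prop :=
  (∫ x, x ∂μ) = 0 ∧ ∀ i j, ∫ x, x i * x j ∂μ = if i = j then 1 else 0

def UniformlyLogConcave {n : ℕ} (t : ℝ) (μ : Measure (Euc n)) : Prop :=
  ∃ g : Euc n → ℝ, Measurable g ∧ IsLogConcaveFun g ∧
    μ = volume.withDensity (fun x => ENNReal.ofReal (Real.exp (-t * ‖x‖ ^ 2 / 2) * g x))

def IsRegularPotential {n : ℕ} (ψ : Euc n → ℝ) : Prop :=
  ContDiff ℝ (⊤ : ℕ∞) ψ ∧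
  (∃ ε : ℝ, 0 < ε ∧ ∀ x v : Euc n,
    ε * ‖v‖ ^ 2 ≤ iteratedFDeriv ℝ 2 ψ x ![v, v] ∧
    iteratedFDeriv ℝ 2 ψ x ![v, v] ≤ ε⁻¹ * ‖v‖ ^ 2) ∧
  (∀ m : ℕ, ∃ C : ℝ, ∃ k : ℕ, ∀ x, ‖iteratedFDeriv ℝ m ψ x‖ ≤ C * (1 + ‖x‖) ^ k)

def IsRegularMeasure {n : ℕ} (μ : Measure (Euc n)) (ψ : Euc n → ℝ) : Prop :=
  IsRegularPotential ψ ∧ μ = volume.withDensity (fun x => ENNReal.ofReal (Real.exp (-ψ x)))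

def IsTempered {n : ℕ} (ρ : Euc n → ℝ) (f : Euc n → ℝ) : Prop :=
  ContDiff ℝ (⊤ : ℕ∞) f ∧ ∀ m : ℕ, ∃ C : ℝ, 0 < C ∧ ∃ a : ℝ, 0 < a ∧ ∀ x,
    ‖iteratedFDeriv ℝ m f x‖ ≤ C / Real.sqrt (ρ x) * Real.exp (-a * ‖x‖)

def lap {n : ℕ} (f : Euc n → ℝ) (x : Euc n) : ℝ :=
  ∑ i, iteratedFDeriv ℝ 2 f x ![EuclideanSpace.single i (1:ℝ), EuclideanSpace.single i (1:ℝ)]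

def Lop {n : ℕ} (ψ u : Euc n → ℝ) (x : Euc n) : ℝ :=
  lap u x - ⟪gradient ψ x, gradient u x⟫

def gaussDensity (n : ℕ) (s : ℝ) (x : Euc n) : ℝ :=
  (2 * π * s) ^ (-(n : ℝ) / 2) * Real.exp (-‖x‖ ^ 2 / (2 * s))

def gaussMeasure (n : ℕ) (s : ℝ) : Measure (Euc n) :=
  volume.withDensity fun x => ENNReal.ofReal (gaussDensity n s x)

def tiltZ {n : ℕ} (ρ : Euc n → ℝ) (t : ℝ) (θ : Euc n) : ℝ :=
  ∫ x, Real.exp (⟪θ, x⟫ - t * ‖x‖ ^ 2 / 2) * ρ x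

def tiltDensity {n : ℕ} (ρ : Euc n → ℝ) (t : ℝ) (θ : Euc n) (x : Euc n) : ℝ :=
  Real.exp (⟪θ, x⟫ - t * ‖x‖ ^ 2 / 2) * ρ x / tiltZ ρ t θ

def tiltMeasure {n : ℕ} (ρ : Euc n → ℝ) (t : ℝ) (θ : Euc n) : Measure (Euc n) :=
  volume.withDensity fun x => ENNReal.ofReal (tiltDensity ρ t θ x)

def varD {n : ℕ} (p : Euc n → ℝ) (f : Euc n → ℝ) : ℝ :=
  (∫ x, f x ^ 2 * p x) - (∫ x, f x * p x) ^ 2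

end

noncomputable section
open scoped ContDiff
namespace ILich

variable {n : ℕ}

/-- partial derivative -/
def pd (i : Fin n) (u : Euc n → ℝ) (x : Euc n) : ℝ :=
  fderiv ℝ u x (EuclideanSpace.single i (1:ℝ))

/-- The operator `Δ - ∇ψ·∇`. -/
def LL (ψ u : Euc n → ℝ) (x : Euc n) : ℝ :=
  ∑ i, (pd i (pd i u) x - pd i ψ x * pd i u x)

lemma pd_sm {u : Euc n → ℝ} (hu : ContDiff ℝ ∞ u) (i : Fin n) : ContDiff ℝ ∞ (pd i u) := by
  have h1 : ContDiff ℝ ∞ (fderiv ℝ u) := hu.fderiv_right (by norm_num)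
  exact h1.clm_apply contDiff_const

lemma pd_cs {u : Euc n → ℝ} (hu : HasCompactSupport u) (i : Fin n) : HasCompactSupport (pd i u) :=
  hu.fderiv_apply ℝ _

lemma sm_diff {u : Euc n → ℝ} (hu : ContDiff ℝ ∞ u) (x : Euc n) : DifferentiableAt ℝ u x :=
  (hu.differentiable (by simp)) x

lemma pd_add {u v : Euc n → ℝ} (hu : ContDiff ℝ ∞ u) (hv : ContDiff ℝ ∞ v) (i : Fin n) :
    pd i (fun x => u x + v x) = fun x => pd i u x + pd i v x := by
  ext x
  simp only [pd]
  rw [fderiv_fun_add (sm_diff hu x) (sm_diff hv x)]; rfl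

lemma pd_sub {u v : Euc n → ℝ} (hu : ContDiff ℝ ∞ u) (hv : ContDiff ℝ ∞ v) (i : Fin n) :
    pd i (fun x => u x - v x) = fun x => pd i u x - pd i v x := by
  ext x
  simp only [pd]
  rw [fderiv_fun_sub (sm_diff hu x) (sm_diff hv x)]; rfl

lemma pd_mul {u v : Euc n → ℝ} (hu : ContDiff ℝ ∞ u) (hv : ContDiff ℝ ∞ v) (i : Fin n) :
    pd i (fun x => u x * v x) = fun x => u x * pd i v x + v x * pd i u x := by
  ext x
  simp only [pd]
  rw [fderiv_fun_mul (sm_diff hu x) (sm_diff hv x)]; rfl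

lemma pd_cmul {u : Euc n → ℝ} (hu : ContDiff ℝ ∞ u) (c : ℝ) (i : Fin n) :
    pd i (fun x => c * u x) = fun x => c * pd i u x := by
  ext x
  simp only [pd]
  rw [fderiv_const_mul (sm_diff hu x)]; rfl

lemma pd_sum {ι : Type*} (s : Finset ι) {u : ι → Euc n → ℝ} (hu : ∀ j, ContDiff ℝ ∞ (u j)) (i : Fin n) :
    pd i (fun x => ∑ j ∈ s, u j x) = fun x => ∑ j ∈ s, pd i (u j) x := by
  ext x
  simp only [pd]
  rw [fderiv_fun_sum (fun j _ => sm_diff (hu j) x)]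
  simp

lemma pd_exp {u : Euc n → ℝ} (hu : ContDiff ℝ ∞ u) (i : Fin n) :
    pd i (fun x => Real.exp (u x)) = fun x => Real.exp (u x) * pd i u x := by
  ext x
  simp only [pd]
  rw [fderiv_exp (sm_diff hu x)]; rfl

lemma pd_comm {u : Euc n → ℝ} (hu : ContDiff ℝ ∞ u) (i j : Fin n) :
    pd i (pd j u) = pd j (pd i u) := by
  have key : ∀ (x v w : Euc n), fderiv ℝ (fun y => fderiv ℝ u y v) x w = fderiv ℝ (fderiv ℝ u) x w v := by
    intro x v w
    have h1 : ContDiff ℝ ∞ (fderiv ℝ u) := hu.fderiv_right (by norm_num)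
    rw [fderiv_clm_apply ((h1.differentiable (by simp)) x) (by fun_prop)]
    simp
  ext x
  have hs : IsSymmSndFDerivAt ℝ u x := by
    apply (hu.contDiffAt).isSymmSndFDerivAt
    simp
    exact WithTop.coe_le_coe.2 (le_top (a := (2:ℕ∞)))
  show fderiv ℝ (fun y => fderiv ℝ u y _) x _ = fderiv ℝ (fun y => fderiv ℝ u y _) x _
  rw [key, key]
  exact hs.eq _ _

lemma LL_sm {ψ u : Euc n → ℝ} (hψ : ContDiff ℝ ∞ ψ) (hu : ContDiff ℝ ∞ u) : ContDiff ℝ ∞ (LL ψ u) := by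
  unfold LL
  refine ContDiff.sum fun i _ => ?_
  exact (pd_sm (pd_sm hu i) i).sub ((pd_sm hψ i).mul (pd_sm hu i))

lemma cs_of_zero {f : Euc n → ℝ} {g : Euc n → ℝ} (hg : HasCompactSupport g)
    (h : ∀ x, x ∉ tsupport g → f x = 0) : HasCompactSupport f :=
  HasCompactSupport.intro hg h

lemma pd_zero_of_notMem {u : Euc n → ℝ} (i : Fin n) {x : Euc n} (hx : x ∉ tsupport u) : pd i u x = 0 := by
  simp [pd, fderiv_of_notMem_tsupport ℝ hx]

lemma pd_tsupport (u : Euc n → ℝ) (i : Fin n) : tsupport (pd i u) ⊆ tsupport u :=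
  tsupport_fderiv_apply_subset ℝ _

lemma LL_zero {ψ u : Euc n → ℝ} {x : Euc n} (hx : x ∉ tsupport u) : LL ψ u x = 0 := by
  unfold LL
  apply Finset.sum_eq_zero
  intro i _
  rw [pd_zero_of_notMem i hx, pd_zero_of_notMem i (fun h => hx (pd_tsupport u i h))]
  simp

lemma LL_cs {ψ u : Euc n → ℝ} (hu : HasCompactSupport u) : HasCompactSupport (LL ψ u) :=
  cs_of_zero hu fun _ => LL_zero

lemma int_cs {f : Euc n → ℝ} (hf : Continuous f) (hc : HasCompactSupport f) : Integrable f :=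
  hf.integrable_of_hasCompactSupport hc

lemma ibp_comp {g F : Euc n → ℝ} (hg : ContDiff ℝ ∞ g) (hF : ContDiff ℝ ∞ F)
    (hc : HasCompactSupport g ∨ HasCompactSupport F) (i : Fin n) :
    ∫ x, g x * pd i F x = - ∫ x, pd i g x * F x := by
  have c1 := hg.continuous
  have c2 := hF.continuous
  have c3 := (pd_sm hg i).continuous
  have c4 := (pd_sm hF i).continuous
  refine integral_mul_fderiv_eq_neg_fderiv_mul_of_integrable (μ := volume) ?_ ?_ ?_ (fun x _ => sm_diff hg x) (fun x _ => sm_diff hF x)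
  · refine int_cs (c3.mul c2) ?_
    rcases hc with h | h
    · exact (pd_cs h i).mul_right
    · exact h.mul_left
  · refine int_cs (c1.mul c4) ?_
    rcases hc with h | h
    · exact h.mul_right
    · exact (pd_cs h i).mul_left
  · refine int_cs (c1.mul c2) ?_
    rcases hc with h | h
    · exact h.mul_right
    · exact h.mul_left

lemma sm_expneg {ψ : Euc n → ℝ} (hψ : ContDiff ℝ ∞ ψ) : ContDiff ℝ ∞ (fun x => Real.exp (-ψ x)) :=
  hψ.neg.exp

lemma pd_flux {ψ u : Euc n → ℝ} (hψ : ContDiff ℝ ∞ ψ) (hu : ContDiff ℝ ∞ u) (i : Fin n) (x : Euc n) :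
    pd i (fun x => pd i u x * Real.exp (-ψ x)) x
      = (pd i (pd i u) x - pd i ψ x * pd i u x) * Real.exp (-ψ x) := by
  rw [pd_mul (pd_sm hu i) (sm_expneg hψ)]
  have : pd i (fun x => Real.exp (-ψ x)) = fun x => Real.exp (-ψ x) * (-pd i ψ x) := by
    rw [pd_exp hψ.neg]
    ext x
    congr 1
    simp [pd, fderiv_fun_neg]
  rw [this]
  ring

lemma ibp {ψ g u : Euc n → ℝ} (hψ : ContDiff ℝ ∞ ψ) (hg : ContDiff ℝ ∞ g) (hu : ContDiff ℝ ∞ u)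
    (hc : HasCompactSupport g ∨ HasCompactSupport u) :
    ∫ x, g x * LL ψ u x * Real.exp (-ψ x)
      = - ∫ x, (∑ i, pd i g x * pd i u x) * Real.exp (-ψ x) := by
  have e1 : ∀ x, g x * LL ψ u x * Real.exp (-ψ x)
      = ∑ i, g x * pd i (fun x => pd i u x * Real.exp (-ψ x)) x := by
    intro x
    unfold LL
    simp_rw [pd_flux hψ hu]
    rw [Finset.mul_sum, Finset.sum_mul]
    exact Finset.sum_congr rfl fun i _ => by ring
  have e2 : ∀ x, (∑ i, pd i g x * pd i u x) * Real.exp (-ψ x)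
      = ∑ i, pd i g x * (pd i u x * Real.exp (-ψ x)) := by
    intro x
    rw [Finset.sum_mul]
    exact Finset.sum_congr rfl fun i _ => by ring
  have sF : ∀ i, ContDiff ℝ ∞ (fun x => pd i u x * Real.exp (-ψ x)) := fun i =>
    (pd_sm hu i).mul (sm_expneg hψ)
  have cF : ∀ i, HasCompactSupport g ∨ HasCompactSupport (fun x => pd i u x * Real.exp (-ψ x)) := by
    intro i
    rcases hc with h | h
    · exact Or.inl h
    · exact Or.inr (pd_cs h i).mul_right
  simp_rw [e1, e2]
  rw [integral_finsetSum, integral_finsetSum, ← Finset.sum_neg_distrib]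
  · exact Finset.sum_congr rfl fun i _ => ibp_comp hg (sF i) (cF i) i
  · intro i _
    refine int_cs ((pd_sm hg i).continuous.mul (sF i).continuous) ?_
    rcases cF i with h | h
    · exact (pd_cs h i).mul_right
    · exact h.mul_left
  · intro i _
    refine int_cs (hg.continuous.mul (pd_sm (sF i) i).continuous) ?_
    rcases cF i with h | h
    · exact h.mul_right
    · exact (pd_cs h i).mul_left

lemma pd_LL {ψ u : Euc n → ℝ} (hψ : ContDiff ℝ ∞ ψ) (hu : ContDiff ℝ ∞ u) (j : Fin n) (x : Euc n) :
    pd j (LL ψ u) x = LL ψ (pd j u) x - ∑ i, pd j (pd i ψ) x * pd i u x := by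
  have : LL ψ u = fun x => ∑ i, (fun y => pd i (pd i u) y - pd i ψ y * pd i u y) x := rfl
  rw [this, pd_sum]
  · unfold LL
    rw [← Finset.sum_sub_distrib]
    refine Finset.sum_congr rfl fun i _ => ?_
    rw [pd_sub (pd_sm (pd_sm hu i) i) ((pd_sm hψ i).mul (pd_sm hu i)), pd_mul (pd_sm hψ i) (pd_sm hu i)]
    rw [pd_comm (pd_sm hu i) j i, pd_comm hu j i]
    ring
  · intro i
    exact (pd_sm (pd_sm hu i) i).sub ((pd_sm hψ i).mul (pd_sm hu i))

/-- Integrated Bochner formula. -/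
lemma bochner {ψ u : Euc n → ℝ} (hψ : ContDiff ℝ ∞ ψ) (hu : ContDiff ℝ ∞ u) (hc : HasCompactSupport u) :
    ∫ x, LL ψ u x ^ 2 * Real.exp (-ψ x)
      = (∑ j, ∫ x, (∑ i, pd i (pd j u) x ^ 2) * Real.exp (-ψ x))
        + ∫ x, (∑ j, ∑ i, pd j (pd i ψ) x * pd i u x * pd j u x) * Real.exp (-ψ x) := by
  have hL := LL_sm hψ hu
  have ce := (sm_expneg hψ).continuous
  have cp := fun j => (pd_sm hu j).continuous
  have h1 : ∫ x, LL ψ u x ^ 2 * Real.exp (-ψ x) = ∫ x, LL ψ u x * LL ψ u x * Real.exp (-ψ x) := by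
    simp_rw [sq]
  rw [h1, ibp hψ hL hu (Or.inr hc)]
  have h2 : ∀ x, (∑ j, pd j (LL ψ u) x * pd j u x) * Real.exp (-ψ x)
      = (∑ j, pd j u x * LL ψ (pd j u) x * Real.exp (-ψ x))
        - (∑ j, ∑ i, pd j (pd i ψ) x * pd i u x * pd j u x) * Real.exp (-ψ x) := by
    intro x
    simp_rw [pd_LL hψ hu]
    rw [Finset.sum_mul, Finset.sum_mul, ← Finset.sum_sub_distrib]
    refine Finset.sum_congr rfl fun j _ => ?_
    rw [← Finset.sum_mul]
    ring
  have i1 : ∀ j ∈ Finset.univ, Integrable (fun x => pd j u x * LL ψ (pd j u) x * Real.exp (-ψ x)) := by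
    intro j _
    refine int_cs (((cp j).mul (LL_sm hψ (pd_sm hu j)).continuous).mul ce) ?_
    exact ((pd_cs hc j).mul_right).mul_right
  have i2 : Integrable (fun x => (∑ j, ∑ i, pd j (pd i ψ) x * pd i u x * pd j u x) * Real.exp (-ψ x)) := by
    refine int_cs (Continuous.mul ?_ ce) ?_
    · refine continuous_finsetSum _ fun j _ => continuous_finsetSum _ fun i _ => ?_
      exact (((pd_sm (pd_sm hψ i) j).continuous).mul (cp i)).mul (cp j)
    · refine cs_of_zero hc fun x hx => ?_
      simp [pd_zero_of_notMem _ hx]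
  simp_rw [h2]
  rw [integral_sub (integrable_finsetSum _ i1) i2, integral_finsetSum _ i1, neg_sub, sub_eq_neg_add,
    ← Finset.sum_neg_distrib]
  congr 1
  refine Finset.sum_congr rfl fun j _ => ?_
  rw [ibp hψ (pd_sm hu j) (pd_sm hu j) (Or.inr (pd_cs hc j)), neg_neg]
  simp_rw [sq]

end ILich
end

noncomputable section
open scoped ContDiff
namespace ILich

variable {n : ℕ}

/-- convolution `k ⋆ φ` -/
def mol (k φ : Euc n → ℝ) (x : Euc n) : ℝ := ∫ y, k y * φ (x - y)

open scoped Convolution in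
lemma mol_eq (k φ : Euc n → ℝ) : mol k φ = (k ⋆[ContinuousLinearMap.mul ℝ ℝ, volume] φ) := rfl

lemma mol_integrable {k φ : Euc n → ℝ} (hk : LocallyIntegrable k) (hφ : Continuous φ)
    (hc : HasCompactSupport φ) (x : Euc n) : Integrable (fun y => k y * φ (x - y)) :=
  hc.convolutionExists_right (ContinuousLinearMap.mul ℝ ℝ) hk hφ x

lemma mol_sm {k φ : Euc n → ℝ} (hk : LocallyIntegrable k) (hφ : ContDiff ℝ ∞ φ)
    (hc : HasCompactSupport φ) : ContDiff ℝ ∞ (mol k φ) := by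
  rw [mol_eq]
  exact hc.contDiff_convolution_right _ hk hφ

lemma pd_mol {k φ : Euc n → ℝ} (hk : LocallyIntegrable k) (hφ : ContDiff ℝ ∞ φ)
    (hc : HasCompactSupport φ) (i : Fin n) : pd i (mol k φ) = mol k (pd i φ) := by
  ext x
  rw [mol_eq, mol_eq]
  have h1 : ContDiff ℝ 1 φ := hφ.of_le (by exact_mod_cast le_top)
  have := hc.hasFDerivAt_convolution_right (ContinuousLinearMap.mul ℝ ℝ) hk h1 x
  unfold pd
  rw [this.fderiv, convolution_precompR_apply _ hk (hc.fderiv ℝ) (h1.continuous_fderiv (by simp))]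

lemma refl_sm {φ : Euc n → ℝ} (hφ : ContDiff ℝ ∞ φ) (x : Euc n) :
    ContDiff ℝ ∞ (fun y => φ (x - y)) := hφ.comp (contDiff_const.sub contDiff_id)

lemma refl_cs {φ : Euc n → ℝ} (hφ : HasCompactSupport φ) (x : Euc n) :
    HasCompactSupport (fun y => φ (x - y)) :=
  hφ.comp_homeomorph (Homeomorph.subLeft x)

lemma pd_refl {φ : Euc n → ℝ} (hφ : ContDiff ℝ ∞ φ) (x : Euc n) (i : Fin n) :
    pd i (fun y => φ (x - y)) = fun y => - pd i φ (x - y) := by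
  ext y
  unfold pd
  have h1 : HasFDerivAt (fun y : Euc n => x - y) (-(ContinuousLinearMap.id ℝ (Euc n))) y :=
    (hasFDerivAt_id y).const_sub x
  have h2 : HasFDerivAt (fun y => φ (x - y)) _ y := (sm_diff hφ (x - y)).hasFDerivAt.comp y h1
  rw [h2.fderiv]
  simp

/-- A function whose weak partial derivatives vanish is a.e. constant. -/
lemma const_of_weak {h : Euc n → ℝ} (hh : LocallyIntegrable h)
    (hw : ∀ w : Euc n → ℝ, ContDiff ℝ ∞ w → HasCompactSupport w → ∀ i, ∫ x, h x * pd i w x = 0) :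
    ∃ c : ℝ, h =ᵐ[volume] fun _ => c := by
  let φ : ℕ → ContDiffBump (0 : Euc n) := fun m => ⟨1 / ((m:ℝ) + 1), 2 / ((m:ℝ) + 1), by positivity, by gcongr; norm_num⟩
  have hlim : Filter.Tendsto (fun m => (φ m).rOut) Filter.atTop (nhds 0) := by
    show Filter.Tendsto (fun m : ℕ => 2 / ((m:ℝ) + 1)) Filter.atTop (nhds 0)
    have := (tendsto_one_div_add_atTop_nhds_zero_nat (𝕜 := ℝ)).const_mul 2
    simp only [mul_zero] at this
    refine this.congr fun m => by ring
  have hratio : ∀ᶠ m in Filter.atTop, (φ m).rOut ≤ 2 * (φ m).rIn := by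
    refine Filter.Eventually.of_forall fun m => ?_
    show 2 / ((m:ℝ) + 1) ≤ 2 * (1 / ((m:ℝ) + 1))
    rw [mul_one_div]
  have hconv := ContDiffBump.ae_convolution_tendsto_right_of_locallyIntegrable (μ := volume) hlim hratio hh
  have hconst : ∀ m x, mol h ((φ m).normed volume) x = mol h ((φ m).normed volume) 0 := by
    intro m x
    have hs : ContDiff ℝ ∞ ((φ m).normed (volume : Measure (Euc n))) := (φ m).contDiff_normed
    have hc := (φ m).hasCompactSupport_normed (μ := (volume : Measure (Euc n)))
    refine is_const_of_fderiv_eq_zero (𝕜 := ℝ) (f := mol h ((φ m).normed volume)) ((mol_sm hh hs hc).differentiable (by simp)) ?_ x 0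
    intro y
    have hz : ∀ i, pd i (mol h ((φ m).normed volume)) y = 0 := by
      intro i
      rw [pd_mol hh hs hc]
      have := hw _ (refl_sm hs y) (refl_cs hc y) i
      rw [pd_refl hs] at this
      simp only [mul_neg, integral_neg, neg_eq_zero] at this
      exact this
    ext v
    have hv : v = ∑ i, v i • EuclideanSpace.single i (1:ℝ) := by
      ext j; simp [Pi.single_apply]
    rw [hv, map_sum]
    simp only [map_smul]
    simp only [pd] at hz
    simp [hz]
  have hconv' : ∀ᵐ x, Filter.Tendsto (fun m => mol h ((φ m).normed volume) 0) Filter.atTop (nhds (h x)) := by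
    filter_upwards [hconv] with x hx
    refine hx.congr fun m => ?_
    rw [← hconst m x, convolution_lsmul_swap]
    simp only [mol, smul_eq_mul, mul_comm]
  have hne : ∃ x₀, Filter.Tendsto (fun m => mol h ((φ m).normed volume) 0) Filter.atTop (nhds (h x₀)) := by
    exact hconv'.exists
  obtain ⟨x₀, hx₀⟩ := hne
  refine ⟨h x₀, ?_⟩
  filter_upwards [hconv'] with x hx
  exact tendsto_nhds_unique hx hx₀

lemma mol_sq_le {k φ : Euc n → ℝ} (hk : MemLp k 2) (hφ : Continuous φ) (hc : HasCompactSupport φ)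
    (h0 : ∀ x, 0 ≤ φ x) (h1 : ∫ x, φ x = 1) (x : Euc n) :
    mol (fun y => |k y|) φ x ^ 2 ≤ mol (fun y => k y ^ 2) φ x := by
  have hkl : LocallyIntegrable (fun y => |k y|) := by
    exact (hk.norm).locallyIntegrable (by norm_num)
  have hk2 : Integrable (fun y => k y ^ 2) := hk.integrable_sq
  have i1 := mol_integrable hkl hφ hc x
  have i2 := mol_integrable hk2.locallyIntegrable hφ hc x
  have i3 : Integrable (fun y => φ (x - y)) := (int_cs hφ hc).comp_sub_left x
  have e3 : ∫ y, φ (x - y) = 1 := by rw [integral_sub_left_eq_self (fun y => φ y), h1]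
  set c := mol (fun y => |k y|) φ x with hcdef
  have hpos : 0 ≤ ∫ y, (|k y| - c) ^ 2 * φ (x - y) :=
    integral_nonneg fun y => mul_nonneg (sq_nonneg _) (h0 _)
  have hexp : ∀ y, (|k y| - c) ^ 2 * φ (x - y)
      = (k y ^ 2 * φ (x - y) - (2 * c) * (|k y| * φ (x - y))) + c ^ 2 * φ (x - y) := by
    intro y
    rw [← sq_abs (k y)]; ring
  simp_rw [hexp] at hpos
  have i12 : Integrable (fun y => k y ^ 2 * φ (x - y) - (2 * c) * (|k y| * φ (x - y))) :=
    i2.sub (i1.const_mul _)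
  rw [integral_add i12 (i3.const_mul _), integral_sub i2 (i1.const_mul _),
    integral_const_mul, integral_const_mul, e3] at hpos
  change 0 ≤ mol (fun y => k y ^ 2) φ x - 2 * c * mol (fun y => |k y|) φ x + c ^ 2 * 1 at hpos
  rw [← hcdef] at hpos
  nlinarith

lemma mol_sq_integrable {k φ : Euc n → ℝ} (hk : MemLp k 2) (hφ : Continuous φ) (hc : HasCompactSupport φ) :
    Integrable (mol (fun y => k y ^ 2) φ) := by
  rw [mol_eq]
  exact hk.integrable_sq.integrable_convolution _ (int_cs hφ hc)

lemma mol_sq_integral {k φ : Euc n → ℝ} (hk : MemLp k 2) (hφ : Continuous φ) (hc : HasCompactSupport φ)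
    (h1 : ∫ x, φ x = 1) :
    ∫ x, mol (fun y => k y ^ 2) φ x = ∫ y, k y ^ 2 := by
  rw [mol_eq, integral_convolution _ hk.integrable_sq (int_cs hφ hc), h1]
  simp

/-- weak convergence of mollifications -/
lemma mol_weak {k g : Euc n → ℝ} (hk : LocallyIntegrable k) (hg : Continuous g) (hgc : HasCompactSupport g)
    {δ : ℝ} (hδ : 0 < δ) : ∃ r > 0, ∀ φ : ContDiffBump (0 : Euc n), φ.rOut ≤ r →
      |(∫ x, mol k (φ.normed volume) x * g x) - ∫ x, k x * g x| ≤ δ := by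
  obtain ⟨K, hK, hKs⟩ : ∃ K : Set (Euc n), IsCompact K ∧ Metric.cthickening 1 (tsupport g) ⊆ K :=
    ⟨_, hgc.isCompact.cthickening, subset_rfl⟩
  have hKm : MeasurableSet K := hK.isClosed.measurableSet
  have hkK : IntegrableOn k K := hk.integrableOn_isCompact hK
  have hout : ∀ x y, dist x y ≤ 1 → y ∉ K → g x = 0 := by
    intro x y hxy hy
    by_contra hne
    exact hy (hKs (Metric.mem_cthickening_of_dist_le y x 1 _ (subset_tsupport _ hne) (by rwa [dist_comm])))
  set A := ∫ y in K, |k y| with hA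
  have hA0 : 0 ≤ A := integral_nonneg fun _ => abs_nonneg _
  have huc := hgc.uniformContinuous_of_continuous hg
  obtain ⟨r, hr, hru⟩ := Metric.uniformContinuous_iff.1 huc (δ / (A + 1)) (by positivity)
  refine ⟨min r 1, lt_min hr one_pos, fun φ hφ => ?_⟩
  have hφr : φ.rOut ≤ r := hφ.trans (min_le_left _ _)
  have hφ1 : φ.rOut ≤ 1 := hφ.trans (min_le_right _ _)
  have φc : Continuous (φ.normed (volume : Measure (Euc n))) := φ.continuous_normed
  have φs : ∀ x y : Euc n, φ.normed volume (x - y) ≠ 0 → dist x y < φ.rOut := by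
    intro x y hne
    have : x - y ∈ Function.support (φ.normed (volume : Measure (Euc n))) := hne
    rw [φ.support_normed_eq] at this
    simpa [dist_eq_norm] using this
  obtain ⟨Mφ, hMφ⟩ := φc.bounded_above_of_compact_support (φ.hasCompactSupport_normed (μ := (volume : Measure (Euc n))))
  -- product integrability
  have hprod : Integrable (Function.uncurry fun x y => k y * φ.normed volume (x - y) * g x)
      ((volume : Measure (Euc n)).prod (volume : Measure (Euc n))) := by
    have i0 : Integrable (K.indicator k) := hkK.integrable_indicator hKm
    have i1 : Integrable (fun z : Euc n × Euc n => g z.1 * K.indicator k z.2)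
        ((volume : Measure (Euc n)).prod (volume : Measure (Euc n))) :=
      (int_cs hg hgc).mul_prod i0
    have i2 := i1.bdd_mul (c := Mφ) (f := fun z : Euc n × Euc n => φ.normed volume (z.1 - z.2))
      (by exact (φc.comp (continuous_fst.sub continuous_snd)).aestronglyMeasurable)
      (Filter.Eventually.of_forall fun z => hMφ _)
    refine i2.congr (Filter.Eventually.of_forall fun z => ?_)
    obtain ⟨x, y⟩ := z
    simp only [Function.uncurry]
    by_cases hy : y ∈ K
    · rw [Set.indicator_of_mem hy]; ring
    · rw [Set.indicator_of_notMem hy]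
      by_cases hne : φ.normed volume (x - y) = 0
      · simp [hne]
      · rw [hout x y ((φs x y hne).le.trans hφ1) hy]; simp
  have e1 : ∫ x, mol k (φ.normed volume) x * g x
      = ∫ y, k y * ∫ x, φ.normed volume (x - y) * g x := by
    have : ∀ x, mol k (φ.normed volume) x * g x = ∫ y, k y * φ.normed volume (x - y) * g x := by
      intro x
      rw [integral_mul_const]; rfl
    simp_rw [this]
    rw [integral_integral_swap hprod]
    refine integral_congr_ae (Filter.Eventually.of_forall fun y => ?_)
    simp only [mul_assoc]
    rw [integral_const_mul]
  have hG : ∀ y, |(∫ x, φ.normed volume (x - y) * g x) - g y| ≤ K.indicator (fun _ => δ / (A + 1)) y := by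
    intro y
    have iφ : Integrable (fun x => φ.normed volume (x - y)) := (int_cs φc φ.hasCompactSupport_normed).comp_sub_right y
    have iφg : Integrable (fun x => φ.normed volume (x - y) * g x) := by
      obtain ⟨Mg, hMg⟩ := hg.bounded_above_of_compact_support hgc
      exact iφ.mul_bdd hg.aestronglyMeasurable (Filter.Eventually.of_forall hMg)
    have e : (∫ x, φ.normed volume (x - y) * g x) - g y = ∫ x, φ.normed volume (x - y) * (g x - g y) := by
      have : ∫ x, φ.normed volume (x - y) = 1 := by
        rw [integral_sub_right_eq_self (fun x => φ.normed volume x)]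
        exact φ.integral_normed
      simp_rw [mul_sub]
      rw [integral_sub iφg (iφ.mul_const _), integral_mul_const, this, one_mul]
    rw [e]
    by_cases hy : y ∈ K
    · rw [Set.indicator_of_mem hy]
      have hb : ∀ x, ‖φ.normed volume (x - y) * (g x - g y)‖ ≤ φ.normed volume (x - y) * (δ / (A + 1)) := by
        intro x
        rw [norm_mul, Real.norm_of_nonneg (φ.nonneg_normed _)]
        by_cases hne : φ.normed volume (x - y) = 0
        · simp [hne]
        · have := (hru ((φs x y hne).trans_le hφr)).le
          rw [Real.dist_eq] at this
          exact mul_le_mul_of_nonneg_left this (φ.nonneg_normed _)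
      have := norm_integral_le_of_norm_le (iφ.mul_const (δ / (A + 1))) (Filter.Eventually.of_forall hb)
      rw [integral_mul_const, integral_sub_right_eq_self (fun x => φ.normed volume x), φ.integral_normed, one_mul] at this
      exact this
    · rw [Set.indicator_of_notMem hy]
      have : ∀ x, φ.normed volume (x - y) * (g x - g y) = 0 := by
        intro x
        by_cases hne : φ.normed volume (x - y) = 0
        · simp [hne]
        · rw [hout x y ((φs x y hne).le.trans hφ1) hy, hout y y (by simp) hy]; simp
      simp [this]
  have ig : Integrable (fun x => k x * g x) := hk.integrable_smul_right_of_hasCompactSupport hg hgc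
  have iG : Integrable (fun y => k y * ∫ x, φ.normed volume (x - y) * g x) := by
    have := hprod.swap.integral_prod_left
    refine this.congr (Filter.Eventually.of_forall fun y => ?_)
    simp only [Function.uncurry, Function.comp, Prod.swap, mul_assoc]
    rw [integral_const_mul]
  rw [e1, ← integral_sub iG ig]
  have hb : ∀ y, ‖k y * (∫ x, φ.normed volume (x - y) * g x) - k y * g y‖
      ≤ K.indicator (fun y => |k y| * (δ / (A + 1))) y := by
    intro y
    rw [← mul_sub, norm_mul, Real.norm_eq_abs, Real.norm_eq_abs]
    have := mul_le_mul_of_nonneg_left (hG y) (abs_nonneg (k y))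
    by_cases hy : y ∈ K
    · rw [Set.indicator_of_mem hy] at this ⊢; exact this
    · rw [Set.indicator_of_notMem hy] at this ⊢; simpa using this
  have hi : Integrable (K.indicator (fun y => |k y| * (δ / (A + 1)))) := by
    refine IntegrableOn.integrable_indicator ?_ hKm
    exact (Integrable.abs hkK).mul_const _
  have := norm_integral_le_of_norm_le hi (Filter.Eventually.of_forall hb)
  rw [integral_indicator hKm, integral_mul_const, ← hA] at this
  refine this.trans ?_
  rw [mul_div_assoc', div_le_iff₀ (by positivity)]
  nlinarith

end ILich
end

noncomputable section
open scoped ContDiff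
namespace ILich

variable {n : ℕ}

lemma grad_apply (u : Euc n → ℝ) (x : Euc n) (i : Fin n) : gradient u x i = pd i u x := by
  have h : inner ℝ (gradient u x) (EuclideanSpace.single i (1:ℝ)) = pd i u x := by
    unfold gradient pd
    rw [InnerProductSpace.toDual_symm_apply]
  rw [← h, EuclideanSpace.inner_single_right]
  simp only [one_mul]
  exact (RCLike.conj_to_real (x := gradient u x i)).symm

lemma sum_pd_sq (u : Euc n → ℝ) (x : Euc n) : ∑ i, pd i u x ^ 2 = ‖gradient u x‖ ^ 2 := by
  rw [EuclideanSpace.real_norm_sq_eq]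
  simp_rw [grad_apply]

lemma norm_grad (u : Euc n → ℝ) (x : Euc n) : ‖gradient u x‖ = ‖fderiv ℝ u x‖ := by
  unfold gradient
  simp

/-- A family of smooth cutoffs. -/
lemma cutoffs (n : ℕ) : ∃ M : ℝ, 0 ≤ M ∧ ∀ R : ℝ, 1 ≤ R → ∃ χ : Euc n → ℝ, ContDiff ℝ ∞ χ ∧ HasCompactSupport χ ∧
    (∀ x, 0 ≤ χ x) ∧ (∀ x, χ x ≤ 1) ∧ (∀ x, ‖x‖ ≤ R → χ x = 1) ∧ (∀ x, ‖gradient χ x‖ ≤ M / R) := by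
  let χ0 : ContDiffBump (0 : Euc n) := ⟨1, 2, by norm_num, by norm_num⟩
  have hs : ContDiff ℝ ∞ (χ0 : Euc n → ℝ) := χ0.contDiff
  have hc : HasCompactSupport (χ0 : Euc n → ℝ) := χ0.hasCompactSupport
  obtain ⟨M, hM⟩ := (hs.continuous_fderiv (by simp)).bounded_above_of_compact_support (hc.fderiv ℝ)
  have hM0 : 0 ≤ M := (norm_nonneg _).trans (hM 0)
  refine ⟨M, hM0, fun R hR => ?_⟩
  have hR0 : 0 < R := by linarith
  refine ⟨fun x => χ0 (R⁻¹ • x), hs.comp (contDiff_const_smul _), ?_, fun x => χ0.nonneg, fun x => χ0.le_one, ?_, ?_⟩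
  · exact hc.comp_smul (inv_ne_zero hR0.ne')
  · intro x hx
    apply χ0.one_of_mem_closedBall
    show _ ∈ Metric.closedBall _ (1:ℝ)
    rw [mem_closedBall_zero_iff, norm_smul, norm_inv, Real.norm_of_nonneg hR0.le]
    rw [inv_mul_le_iff₀ hR0]; simpa using hx
  · intro x
    rw [norm_grad, fderiv_comp_smul, norm_smul, norm_inv, Real.norm_of_nonneg hR0.le, inv_mul_eq_div]
    gcongr
    exact hM _

/-- Schrödinger potential. -/
def WW (ψ : Euc n → ℝ) (x : Euc n) : ℝ := ∑ i, (pd i ψ x ^ 2 / 4 - pd i (pd i ψ) x / 2)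

lemma WW_cont {ψ : Euc n → ℝ} (hψ : ContDiff ℝ ∞ ψ) : Continuous (WW ψ) := by
  unfold WW
  refine continuous_finsetSum _ fun i _ => ?_
  exact (((pd_sm hψ i).continuous.pow 2).div_const _).sub ((pd_sm (pd_sm hψ i) i).continuous.div_const _)

lemma half_sm {ψ : Euc n → ℝ} (hψ : ContDiff ℝ ∞ ψ) : ContDiff ℝ ∞ (fun x => ψ x / 2) := hψ.div_const 2

lemma exphalf_sm {ψ : Euc n → ℝ} (hψ : ContDiff ℝ ∞ ψ) : ContDiff ℝ ∞ (fun x => Real.exp (ψ x / 2)) :=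
  (half_sm hψ).exp

lemma pd_half {ψ : Euc n → ℝ} (hψ : ContDiff ℝ ∞ ψ) (i : Fin n) :
    pd i (fun x => ψ x / 2) = fun x => pd i ψ x / 2 := by
  have : (fun x => ψ x / 2) = fun x => (1/2:ℝ) * ψ x := by ext x; ring
  rw [this, pd_cmul hψ]; ext x; ring

lemma LL_conj {ψ w : Euc n → ℝ} (hψ : ContDiff ℝ ∞ ψ) (hw : ContDiff ℝ ∞ w) (x : Euc n) :
    LL ψ (fun x => w x * Real.exp (ψ x / 2)) x
      = Real.exp (ψ x / 2) * ((∑ i, pd i (pd i w) x) - WW ψ x * w x) := by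
  have he := exphalf_sm hψ
  have h1 : ∀ i, pd i (fun x => w x * Real.exp (ψ x / 2))
      = fun x => (w x * (pd i ψ x / 2) + pd i w x) * Real.exp (ψ x / 2) := by
    intro i
    rw [pd_mul hw he, pd_exp (half_sm hψ), pd_half hψ]
    ext x; ring
  unfold LL WW
  rw [Finset.sum_mul, ← Finset.sum_sub_distrib, Finset.mul_sum]
  refine Finset.sum_congr rfl fun i _ => ?_
  have s1 : ContDiff ℝ ∞ (fun x => pd i ψ x / 2) := half_sm (pd_sm hψ i)
  have s2 : ContDiff ℝ ∞ (fun x => w x * (pd i ψ x / 2)) := hw.mul s1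
  rw [h1, pd_mul (s2.add (pd_sm hw i)) he, pd_add s2 (pd_sm hw i), pd_mul hw s1, pd_half (pd_sm hψ i),
    pd_exp (half_sm hψ), pd_half hψ]
  ring

lemma energy_cutoff {ψ χ v : Euc n → ℝ} (hψ : ContDiff ℝ ∞ ψ) (hχ : ContDiff ℝ ∞ χ) (hc : HasCompactSupport χ)
    (hv : ContDiff ℝ ∞ v) :
    ∫ x, (∑ i, pd i (fun x => χ x * v x) x ^ 2) * Real.exp (-ψ x)
      = ∫ x, ((∑ i, pd i χ x ^ 2) * v x ^ 2 - χ x ^ 2 * v x * LL ψ v x) * Real.exp (-ψ x) := by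
  have hg : ContDiff ℝ ∞ (fun x => χ x * χ x * v x) := (hχ.mul hχ).mul hv
  have hgc : HasCompactSupport (fun x => χ x * χ x * v x) := (hc.mul_right).mul_right
  have h := ibp hψ hg hv (Or.inl hgc)
  have ce := (sm_expneg hψ).continuous
  have e1 : ∀ x, (∑ i, pd i (fun x => χ x * v x) x ^ 2) * Real.exp (-ψ x)
      = (∑ i, pd i χ x ^ 2) * v x ^ 2 * Real.exp (-ψ x)
        + (∑ i, pd i (fun x => χ x * χ x * v x) x * pd i v x) * Real.exp (-ψ x) := by
    intro x
    rw [← add_mul]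
    congr 1
    rw [Finset.sum_mul, ← Finset.sum_add_distrib]
    refine Finset.sum_congr rfl fun i _ => ?_
    rw [pd_mul hχ hv, pd_mul (hχ.mul hχ) hv, pd_mul hχ hχ]
    ring
  have e2 : ∀ x, ((∑ i, pd i χ x ^ 2) * v x ^ 2 - χ x ^ 2 * v x * LL ψ v x) * Real.exp (-ψ x)
      = (∑ i, pd i χ x ^ 2) * v x ^ 2 * Real.exp (-ψ x) - χ x * χ x * v x * LL ψ v x * Real.exp (-ψ x) := by
    intro x; ring
  have i1 : Integrable (fun x => (∑ i, pd i χ x ^ 2) * v x ^ 2 * Real.exp (-ψ x)) := by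
    refine int_cs (((continuous_finsetSum _ fun i _ => (pd_sm hχ i).continuous.pow 2).mul (hv.continuous.pow 2)).mul ce) ?_
    refine cs_of_zero hc fun x hx => ?_
    simp [pd_zero_of_notMem _ hx]
  have i2 : Integrable (fun x => (∑ i, pd i (fun x => χ x * χ x * v x) x * pd i v x) * Real.exp (-ψ x)) := by
    refine int_cs ((continuous_finsetSum _ fun i _ => (pd_sm hg i).continuous.mul (pd_sm hv i).continuous).mul ce) ?_
    refine cs_of_zero hgc fun x hx => ?_
    simp [pd_zero_of_notMem _ hx]
  have i3 : Integrable (fun x => χ x * χ x * v x * LL ψ v x * Real.exp (-ψ x)) :=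
    int_cs ((hg.continuous.mul (LL_sm hψ hv).continuous).mul ce) ((hgc.mul_right).mul_right)
  simp_rw [e1, e2]
  rw [integral_add i1 i2, integral_sub i1 i3, h]
  ring

/-- Main a priori estimate for mollified weak solutions. -/
lemma core_est {ψ χ k : Euc n → ℝ} (hψ : ContDiff ℝ ∞ ψ) (hχ : ContDiff ℝ ∞ χ) (hc : HasCompactSupport χ)
    (hχ0 : ∀ x, 0 ≤ χ x) (hχ1 : ∀ x, χ x ≤ 1) (hk : MemLp k 2)
    (hweak : ∀ w : Euc n → ℝ, ContDiff ℝ ∞ w → HasCompactSupport w →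
      ∫ x, k x * ((∑ i, pd i (pd i w) x) - WW ψ x * w x) = 0)
    (φ : ContDiffBump (0 : Euc n)) {om Cχ : ℝ} (hom0 : 0 ≤ om)
    (hom : ∀ x ∈ tsupport χ, ∀ y, dist x y < φ.rOut → |WW ψ y - WW ψ x| ≤ om)
    (hCχ : ∀ x, ∑ i, pd i χ x ^ 2 ≤ Cχ) :
    ∫ x, (∑ i, pd i (fun x => χ x * (mol k (φ.normed volume) x * Real.exp (ψ x / 2))) x ^ 2) * Real.exp (-ψ x)
      ≤ (Cχ + om) * ∫ x, k x ^ 2 := by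
  set p : Euc n → ℝ := φ.normed volume with hp
  have ps : ContDiff ℝ ∞ p := φ.contDiff_normed
  have pcs : HasCompactSupport p := φ.hasCompactSupport_normed
  have p0 : ∀ x, 0 ≤ p x := fun x => φ.nonneg_normed x
  have p1 : ∫ x, p x = 1 := φ.integral_normed
  have φs : ∀ x y : Euc n, p (x - y) ≠ 0 → dist x y < φ.rOut := by
    intro x y hne
    have : x - y ∈ Function.support (φ.normed (volume : Measure (Euc n))) := hne
    rw [φ.support_normed_eq] at this
    simpa [dist_eq_norm] using this
  have hkl : LocallyIntegrable k := hk.locallyIntegrable (by norm_num)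
  have hkal : LocallyIntegrable (fun y => |k y|) := (hk.norm).locallyIntegrable (by norm_num)
  set F := mol k p with hF
  have Fs : ContDiff ℝ ∞ F := mol_sm hkl ps pcs
  have hsum : ∀ x, ∑ i, pd i (pd i F) x = ∫ y, k y * (WW ψ y * p (x - y)) := by
    intro x
    have h1 : ∀ i, pd i (pd i F) x = ∫ y, k y * pd i (pd i p) (x - y) := by
      intro i
      rw [hF, pd_mol hkl ps pcs, pd_mol hkl (pd_sm ps i) (pd_cs pcs i)]; rfl
    simp_rw [h1]
    have h2 : ∀ i ∈ Finset.univ, Integrable (fun y => k y * pd i (pd i p) (x - y)) := fun i _ =>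
      mol_integrable hkl (pd_sm (pd_sm ps i) i).continuous (pd_cs (pd_cs pcs i) i) x
    rw [← integral_finsetSum _ h2]
    have h3 := hweak _ (refl_sm ps x) (refl_cs pcs x)
    have h4 : ∀ i, pd i (pd i (fun y => p (x - y))) = fun y => pd i (pd i p) (x - y) := by
      intro i
      rw [pd_refl ps]
      have : (fun y => -pd i p (x - y)) = fun y => (-1:ℝ) * pd i p (x - y) := by ext; ring
      rw [this, pd_cmul (refl_sm (pd_sm ps i) x), pd_refl (pd_sm ps i)]
      ext y; ring
    simp_rw [h4, mul_sub, Finset.mul_sum] at h3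
    rw [integral_sub (integrable_finsetSum _ h2) ?_, sub_eq_zero] at h3
    · exact h3
    · exact hkl.integrable_smul_right_of_hasCompactSupport ((WW_cont hψ).mul (refl_sm ps x).continuous)
        (refl_cs pcs x).mul_left
  have hr : ∀ x ∈ tsupport χ, |(∑ i, pd i (pd i F) x) - WW ψ x * F x| ≤ om * mol (fun y => |k y|) p x := by
    intro x hx
    have i1 : Integrable (fun y => k y * (WW ψ y * p (x - y))) :=
      hkl.integrable_smul_right_of_hasCompactSupport ((WW_cont hψ).mul (refl_sm ps x).continuous)
        (refl_cs pcs x).mul_left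
    have i2 := mol_integrable hkl ps.continuous pcs x
    have i3 := mol_integrable hkal ps.continuous pcs x
    have e : (∑ i, pd i (pd i F) x) - WW ψ x * F x = ∫ y, (k y * (WW ψ y * p (x - y)) - WW ψ x * (k y * p (x - y))) := by
      rw [integral_sub i1 (i2.const_mul _), integral_const_mul, hsum]; rfl
    rw [e]
    have hb : ∀ y, ‖k y * (WW ψ y * p (x - y)) - WW ψ x * (k y * p (x - y))‖ ≤ om * (|k y| * p (x - y)) := by
      intro y
      have : k y * (WW ψ y * p (x - y)) - WW ψ x * (k y * p (x - y)) = (WW ψ y - WW ψ x) * (k y * p (x - y)) := by ring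
      rw [this, norm_mul, norm_mul, Real.norm_of_nonneg (p0 _), Real.norm_eq_abs, Real.norm_eq_abs]
      by_cases hne : p (x - y) = 0
      · simp [hne]
      · exact mul_le_mul_of_nonneg_right (hom x hx y (φs x y hne)) (mul_nonneg (abs_nonneg _) (p0 _))
    have := norm_integral_le_of_norm_le (i3.const_mul om) (Filter.Eventually.of_forall hb)
    rw [integral_const_mul] at this
    exact this
  have hFabs : ∀ x, |F x| ≤ mol (fun y => |k y|) p x := by
    intro x
    have hb : ∀ y, ‖k y * p (x - y)‖ ≤ |k y| * p (x - y) := by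
      intro y
      rw [norm_mul, Real.norm_of_nonneg (p0 _), Real.norm_eq_abs]
    exact norm_integral_le_of_norm_le (mol_integrable hkal ps.continuous pcs x) (Filter.Eventually.of_forall hb)
  have hsq := mol_sq_le hk ps.continuous pcs p0 p1
  have hv : ContDiff ℝ ∞ (fun x => F x * Real.exp (ψ x / 2)) := Fs.mul (exphalf_sm hψ)
  rw [energy_cutoff hψ hχ hc hv, ← mol_sq_integral hk ps.continuous pcs p1, ← integral_const_mul]
  have pw : ∀ x, ((∑ i, pd i χ x ^ 2) * (F x * Real.exp (ψ x / 2)) ^ 2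
      - χ x ^ 2 * (F x * Real.exp (ψ x / 2)) * LL ψ (fun x => F x * Real.exp (ψ x / 2)) x) * Real.exp (-ψ x)
      = (∑ i, pd i χ x ^ 2) * F x ^ 2 - χ x ^ 2 * (F x * ((∑ i, pd i (pd i F) x) - WW ψ x * F x)) := by
    intro x
    rw [LL_conj hψ Fs]
    have : Real.exp (ψ x / 2) * Real.exp (ψ x / 2) * Real.exp (-ψ x) = 1 := by
      rw [← Real.exp_add, ← Real.exp_add]; simp
    linear_combination ((∑ i, pd i χ x ^ 2) * F x ^ 2
      - χ x ^ 2 * (F x * ((∑ i, pd i (pd i F) x) - WW ψ x * F x))) * this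
  simp_rw [pw]
  have cF := Fs.continuous
  refine integral_mono ?_ ((mol_sq_integrable hk ps.continuous pcs).const_mul _) ?_
  · refine int_cs ?_ ?_
    · refine ((continuous_finsetSum _ fun i _ => (pd_sm hχ i).continuous.pow 2).mul (cF.pow 2)).sub
        ((hχ.continuous.pow 2).mul (cF.mul
          ((continuous_finsetSum _ fun i _ => (pd_sm (pd_sm Fs i) i).continuous).sub ((WW_cont hψ).mul cF))))
    · refine cs_of_zero hc fun x hx => ?_
      simp [pd_zero_of_notMem _ hx, image_eq_zero_of_notMem_tsupport hx]
  · intro x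
    have hm0 : 0 ≤ mol (fun y => |k y|) p x := (abs_nonneg _).trans (hFabs x)
    have hCx : 0 ≤ ∑ i, pd i χ x ^ 2 := Finset.sum_nonneg fun i _ => sq_nonneg _
    have hA : (∑ i, pd i χ x ^ 2) * F x ^ 2 ≤ Cχ * mol (fun y => k y ^ 2) p x := by
      have : F x ^ 2 ≤ mol (fun y => k y ^ 2) p x :=
        (by rw [← sq_abs]; exact pow_le_pow_left₀ (abs_nonneg _) (hFabs x) 2 : F x ^ 2 ≤ _).trans (hsq x)
      exact mul_le_mul (hCχ x) this (sq_nonneg _) (hCx.trans (hCχ x))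
    have hB : - (χ x ^ 2 * (F x * ((∑ i, pd i (pd i F) x) - WW ψ x * F x))) ≤ om * mol (fun y => k y ^ 2) p x := by
      by_cases hx : x ∈ tsupport χ
      · refine (neg_le_abs _).trans ?_
        rw [abs_mul, abs_mul, abs_of_nonneg (sq_nonneg (χ x))]
        have h1 : χ x ^ 2 ≤ 1 := pow_le_one₀ (hχ0 x) (hχ1 x)
        have h2 : |F x| * |(∑ i, pd i (pd i F) x) - WW ψ x * F x| ≤ om * mol (fun y => k y ^ 2) p x := by
          calc _ ≤ mol (fun y => |k y|) p x * (om * mol (fun y => |k y|) p x) :=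
                mul_le_mul (hFabs x) (hr x hx) (abs_nonneg _) hm0
            _ = om * mol (fun y => |k y|) p x ^ 2 := by ring
            _ ≤ _ := mul_le_mul_of_nonneg_left (hsq x) hom0
        exact (mul_le_of_le_one_left (by positivity) h1).trans h2
      · rw [image_eq_zero_of_notMem_tsupport hx]
        simp only [ne_eq, OfNat.ofNat_ne_zero, not_false_eq_true, zero_pow, zero_mul, neg_zero]
        exact mul_nonneg hom0 ((sq_nonneg _).trans (hsq x))
    show (_:ℝ) ≤ (Cχ + om) * _
    linarith

end ILich
end

noncomputable section
open scoped ContDiff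
namespace ILich

variable {n : ℕ}

lemma cauchy_schwarz_int {α : Type*} [MeasurableSpace α] {μ : Measure α} {f g : α → ℝ}
    (hf : Integrable (fun x => f x ^ 2) μ) (hg : Integrable (fun x => g x ^ 2) μ)
    (hfg : Integrable (fun x => f x * g x) μ) :
    (∫ x, f x * g x ∂μ) ^ 2 ≤ (∫ x, f x ^ 2 ∂μ) * ∫ x, g x ^ 2 ∂μ := by
  have key : ∀ s : ℝ, 0 ≤ (∫ x, f x ^ 2 ∂μ) * (s * s) + (2 * ∫ x, f x * g x ∂μ) * s + ∫ x, g x ^ 2 ∂μ := by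
    intro s
    have h0 : 0 ≤ ∫ x, (s * f x + g x) ^ 2 ∂μ := integral_nonneg fun x => sq_nonneg _
    have e : ∀ x, (s * f x + g x) ^ 2 = (s * s) * f x ^ 2 + (2 * s) * (f x * g x) + g x ^ 2 := fun x => by ring
    simp_rw [e] at h0
    have i12 : Integrable (fun x => (s * s) * f x ^ 2 + (2 * s) * (f x * g x)) μ := (hf.const_mul _).add (hfg.const_mul _)
    rw [integral_add i12 hg, integral_add (hf.const_mul _) (hfg.const_mul _),
      integral_const_mul, integral_const_mul] at h0
    linarith
  have := discrim_le_zero key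
  unfold discrim at this
  nlinarith

lemma energy_dual {ψ χ v w : Euc n → ℝ} (hψ : ContDiff ℝ ∞ ψ) (hχ : ContDiff ℝ ∞ χ) (hc : HasCompactSupport χ)
    (hv : ContDiff ℝ ∞ v) (hw : ContDiff ℝ ∞ w) (hwc : HasCompactSupport w) (h1 : ∀ x ∈ tsupport w, χ x = 1) (i : Fin n) :
    (∫ x, v x * pd i w x) ^ 2 ≤ (∫ x, (∑ i, pd i (fun x => χ x * v x) x ^ 2) * Real.exp (-ψ x))
      * ∫ x, w x ^ 2 * Real.exp (ψ x) := by
  have hs : ContDiff ℝ ∞ (fun x => χ x * v x) := hχ.mul hv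
  have hsc : HasCompactSupport (fun x => χ x * v x) := hc.mul_right
  have ce := (sm_expneg hψ).continuous
  have ch : Continuous (fun x => Real.exp (-ψ x / 2)) := ((hψ.neg.div_const 2).exp).continuous
  have ch' : Continuous (fun x => Real.exp (ψ x / 2)) := (exphalf_sm hψ).continuous
  have cp : ∀ j, Continuous (pd j (fun x => χ x * v x)) := fun j => (pd_sm hs j).continuous
  have cpc : ∀ j, HasCompactSupport (pd j (fun x => χ x * v x)) := fun j => pd_cs hsc j
  have e0 : ∫ x, v x * pd i w x = ∫ x, χ x * v x * pd i w x := by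
    refine integral_congr_ae (Filter.Eventually.of_forall fun x => ?_)
    by_cases hx : x ∈ tsupport w
    · simp [h1 x hx]
    · simp [pd_zero_of_notMem i hx]
  have e1 : ∫ x, v x * pd i w x = - ∫ x, (pd i (fun x => χ x * v x) x * Real.exp (-ψ x / 2)) * (w x * Real.exp (ψ x / 2)) := by
    rw [e0, ibp_comp hs hw (Or.inr hwc)]
    congr 2
    ext x
    have : Real.exp (-ψ x / 2) * Real.exp (ψ x / 2) = 1 := by rw [← Real.exp_add]; ring_nf; simp
    linear_combination (-(pd i (fun x => χ x * v x) x) * w x) * this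
  rw [e1, neg_sq]
  refine (cauchy_schwarz_int ?_ ?_ ?_).trans ?_
  · refine int_cs (((cp i).mul ch).pow 2) ?_
    refine cs_of_zero hsc fun x hx => ?_
    simp [pd_zero_of_notMem i hx]
  · refine int_cs ((hw.continuous.mul ch').pow 2) ?_
    refine cs_of_zero hwc fun x hx => ?_
    simp [image_eq_zero_of_notMem_tsupport hx]
  · exact int_cs (((cp i).mul ch).mul (hw.continuous.mul ch')) (hwc.mul_right.mul_left)
  · have ee : ∀ x, Real.exp (ψ x / 2) ^ 2 = Real.exp (ψ x) := fun x => by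
      rw [← Real.exp_nat_mul]; congr 1; push_cast; ring
    have ee' : ∀ x, Real.exp (-ψ x / 2) ^ 2 = Real.exp (-ψ x) := fun x => by
      rw [← Real.exp_nat_mul]; congr 1; push_cast; ring
    simp_rw [mul_pow, ee, ee']
    refine mul_le_mul_of_nonneg_right ?_ (integral_nonneg fun x => by positivity)
    refine integral_mono ?_ ?_ fun x => ?_
    · refine int_cs (((cp i).pow 2).mul ce) ?_
      refine cs_of_zero hsc fun x hx => ?_
      simp [pd_zero_of_notMem i hx]
    · refine int_cs ((continuous_finsetSum _ fun i _ => (cp i).pow 2).mul ce) ?_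
      refine cs_of_zero hsc fun x hx => ?_
      simp [pd_zero_of_notMem _ hx]
    · refine mul_le_mul_of_nonneg_right ?_ (Real.exp_pos _).le
      exact Finset.single_le_sum (f := fun i => pd i (fun x => χ x * v x) x ^ 2) (fun j _ => sq_nonneg _) (Finset.mem_univ i)

lemma const_of_orth {ψ h : Euc n → ℝ} (hψ : ContDiff ℝ ∞ ψ)
    (hk : MemLp (fun x => h x * Real.exp (-ψ x / 2)) 2)
    (ho : ∀ u : Euc n → ℝ, ContDiff ℝ ∞ u → HasCompactSupport u → ∫ x, h x * LL ψ u x * Real.exp (-ψ x) = 0) :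
    ∃ c : ℝ, h =ᵐ[volume] fun _ => c := by
  set k : Euc n → ℝ := fun x => h x * Real.exp (-ψ x / 2) with hkdef
  have ch' : Continuous (fun x => Real.exp (ψ x / 2)) := (exphalf_sm hψ).continuous
  have hkl : LocallyIntegrable k := hk.locallyIntegrable (by norm_num)
  have hhk : ∀ x, h x = k x * Real.exp (ψ x / 2) := by
    intro x
    have : Real.exp (-ψ x / 2) * Real.exp (ψ x / 2) = 1 := by rw [← Real.exp_add]; ring_nf; simp
    simp only [hkdef]; linear_combination (-h x) * this
  have hhl : LocallyIntegrable h := by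
    have := LocallyIntegrable.mul_continuous ch' hkl
    refine this.congr (Filter.Eventually.of_forall fun x => (hhk x).symm)
  have hweak : ∀ w : Euc n → ℝ, ContDiff ℝ ∞ w → HasCompactSupport w →
      ∫ x, k x * ((∑ i, pd i (pd i w) x) - WW ψ x * w x) = 0 := by
    intro w hw hwc
    have := ho _ (hw.mul (exphalf_sm hψ)) (hwc.mul_right (f' := fun x => Real.exp (ψ x / 2)))
    rw [← this]
    refine integral_congr_ae (Filter.Eventually.of_forall fun x => ?_)
    simp only
    rw [LL_conj hψ hw]
    have : Real.exp (-ψ x / 2) = Real.exp (ψ x / 2) * Real.exp (-ψ x) := by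
      rw [← Real.exp_add]; congr 1; ring
    simp only [hkdef, this]; ring
  refine const_of_weak hhl fun w hw hwc i => ?_
  obtain ⟨M, hM0, hM⟩ := cutoffs n
  set g : Euc n → ℝ := fun x => Real.exp (ψ x / 2) * pd i w x with hg
  have gc : Continuous g := ch'.mul (pd_sm hw i).continuous
  have gcs : HasCompactSupport g := (pd_cs hwc i).mul_left
  have eI : ∫ x, h x * pd i w x = ∫ x, k x * g x := by
    refine integral_congr_ae (Filter.Eventually.of_forall fun x => ?_)
    simp only [hhk x, hg]; ring
  set K := ∫ x, k x ^ 2 with hK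
  have hK0 : 0 ≤ K := integral_nonneg fun x => sq_nonneg _
  set Cw := ∫ x, w x ^ 2 * Real.exp (ψ x) with hCw
  have hCw0 : 0 ≤ Cw := integral_nonneg fun x => by positivity
  have main : ∀ ε : ℝ, 0 < ε → |∫ x, k x * g x| ≤ ε + Real.sqrt (2 * ε * K * Cw) := by
    intro ε hε
    obtain ⟨R0, hR0⟩ := hwc.isCompact.isBounded.subset_closedBall 0
    set R := max (max 1 R0) (M / ε + M) with hR
    have hR1 : 1 ≤ R := (le_max_left _ _).trans (le_max_left _ _)
    have hMR : (M / R) ^ 2 ≤ ε := by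
      have hRp : 0 < R := by linarith
      have hb : M / ε + M ≤ R := le_max_right _ _
      have a1 : M / R ≤ ε := by
        rw [div_le_iff₀ hRp]
        have : M / ε ≤ R := by linarith
        rw [div_le_iff₀ hε] at this; linarith
      have a2 : M / R ≤ 1 := by
        rw [div_le_one hRp]
        have : 0 ≤ M / ε := by positivity
        linarith
      have a0 : 0 ≤ M / R := by positivity
      nlinarith
    obtain ⟨χ, hχ, hχc, hχ0, hχ1, hχR, hχg⟩ := hM R hR1
    have hcomp : IsCompact (Metric.cthickening 1 (tsupport χ)) := hχc.isCompact.cthickening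
    have huc := hcomp.uniformContinuousOn_of_continuous (WW_cont hψ).continuousOn
    rw [Metric.uniformContinuousOn_iff] at huc
    obtain ⟨r1, hr1, huc⟩ := huc ε hε
    obtain ⟨r2, hr2, hmw⟩ := mol_weak hkl gc gcs hε
    set r := min (min r1 r2) 1 with hr
    have hr0 : 0 < r := lt_min (lt_min hr1 hr2) one_pos
    let φ : ContDiffBump (0 : Euc n) := ⟨r / 2, r, by positivity, by linarith⟩
    have hφ : φ.rOut = r := rfl
    have h1 := hmw φ (by rw [hφ]; exact (min_le_left _ _).trans (min_le_right _ _))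
    have h2 := core_est hψ hχ hχc hχ0 hχ1 hk hweak φ (om := ε) (Cχ := ε) hε.le (by
      intro x hx y hxy
      rw [hφ] at hxy
      have hy : y ∈ Metric.cthickening 1 (tsupport χ) := by
        refine Metric.mem_cthickening_of_dist_le y x 1 _ hx ?_
        rw [dist_comm]; exact hxy.le.trans (min_le_right _ _)
      have := huc y hy x (Metric.self_subset_cthickening _ hx) (by
        rw [dist_comm]; exact hxy.trans_le ((min_le_left _ _).trans (min_le_left _ _)))
      rw [Real.dist_eq] at this; exact this.le) (by
      intro x
      rw [sum_pd_sq]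
      exact (pow_le_pow_left₀ (norm_nonneg _) (hχg x) 2).trans hMR)
    have ps : ContDiff ℝ ∞ (φ.normed (volume : Measure (Euc n))) := φ.contDiff_normed
    have Fs := mol_sm hkl ps φ.hasCompactSupport_normed
    have h3 := energy_dual hψ hχ hχc (Fs.mul (exphalf_sm hψ)) hw hwc (fun x hx => hχR x (by
      have := hR0 hx
      rw [mem_closedBall_zero_iff] at this
      exact this.trans ((le_max_right _ _).trans (le_max_left _ _)))) i
    have h4 : ∫ x, mol k (φ.normed volume) x * Real.exp (ψ x / 2) * pd i w x
        = ∫ x, mol k (φ.normed volume) x * g x := by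
      refine integral_congr_ae (Filter.Eventually.of_forall fun x => ?_)
      simp only [hg]; ring
    rw [h4] at h3
    have h5 : (∫ x, mol k (φ.normed volume) x * g x) ^ 2 ≤ 2 * ε * K * Cw := by
      refine h3.trans ?_
      have := mul_le_mul_of_nonneg_right h2 hCw0
      refine this.trans (le_of_eq ?_)
      ring
    have h6 := Real.abs_le_sqrt h5
    have h7 := abs_sub_abs_le_abs_sub (∫ x, k x * g x) (∫ x, mol k (φ.normed volume) x * g x)
    rw [abs_sub_comm] at h1
    linarith
  rw [eI]
  have hlim : Filter.Tendsto (fun ε : ℝ => ε + Real.sqrt (2 * ε * K * Cw)) (nhdsWithin 0 (Set.Ioi 0)) (nhds 0) := by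
    have : Continuous (fun ε : ℝ => ε + Real.sqrt (2 * ε * K * Cw)) := by fun_prop
    have h0 := this.tendsto 0
    simp only [mul_zero, zero_mul, Real.sqrt_zero, add_zero] at h0
    exact h0.mono_left nhdsWithin_le_nhds
  have : |∫ x, k x * g x| ≤ 0 := ge_of_tendsto hlim (by
    filter_upwards [self_mem_nhdsWithin] with ε hε using main ε hε)
  exact abs_eq_zero.1 (le_antisymm this (abs_nonneg _))

end ILich
end

noncomputable section
open scoped ContDiff
namespace ILich

variable {n : ℕ}

/-- The measure with density `exp(-ψ)`. -/
def mu (ψ : Euc n → ℝ) : Measure (Euc n) := volume.withDensity (fun x => ENNReal.ofReal (Real.exp (-ψ x)))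

lemma int_mu {ψ : Euc n → ℝ} (hψ : Continuous ψ) (f : Euc n → ℝ) :
    ∫ x, f x ∂(mu ψ) = ∫ x, f x * Real.exp (-ψ x) := by
  unfold mu
  rw [integral_withDensity_eq_integral_toReal_smul (by fun_prop) (by simp)]
  refine integral_congr_ae (Filter.Eventually.of_forall fun x => ?_)
  simp only [ENNReal.toReal_ofReal (Real.exp_pos _).le, smul_eq_mul]; ring

lemma integrable_mu {ψ : Euc n → ℝ} (hψ : Continuous ψ) {f : Euc n → ℝ} :
    Integrable f (mu ψ) ↔ Integrable (fun x => f x * Real.exp (-ψ x)) := by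
  unfold mu
  rw [integrable_withDensity_iff_integrable_smul' (by fun_prop) (by simp)]
  refine integrable_congr (Filter.Eventually.of_forall fun x => ?_)
  simp only [ENNReal.toReal_ofReal (Real.exp_pos _).le, smul_eq_mul]; ring

lemma mu_ac (ψ : Euc n → ℝ) : mu ψ ≪ volume := withDensity_absolutelyContinuous _ _

lemma ac_mu {ψ : Euc n → ℝ} (hψ : Continuous ψ) : (volume : Measure (Euc n)) ≪ mu ψ :=
  withDensity_absolutelyContinuous' (by fun_prop) (Filter.Eventually.of_forall fun x => by simp [Real.exp_pos])

lemma LL_add {ψ u v : Euc n → ℝ} (hu : ContDiff ℝ ∞ u) (hv : ContDiff ℝ ∞ v) (x : Euc n) :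
    LL ψ (fun x => u x + v x) x = LL ψ u x + LL ψ v x := by
  unfold LL
  rw [← Finset.sum_add_distrib]
  refine Finset.sum_congr rfl fun i _ => ?_
  rw [pd_add hu hv, pd_add (pd_sm hu i) (pd_sm hv i)]; ring

lemma LL_cmul {ψ u : Euc n → ℝ} (hu : ContDiff ℝ ∞ u) (c : ℝ) (x : Euc n) :
    LL ψ (fun x => c * u x) x = c * LL ψ u x := by
  unfold LL
  rw [Finset.mul_sum]
  refine Finset.sum_congr rfl fun i _ => ?_
  rw [pd_cmul hu, pd_cmul (pd_sm hu i)]; ring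

/-- The submodule of all `LL ψ u`. -/
def KK (ψ : Euc n → ℝ) : Submodule ℝ (Lp ℝ 2 (mu ψ)) where
  carrier := {F | ∃ u : Euc n → ℝ, ContDiff ℝ ∞ u ∧ HasCompactSupport u ∧ (F : Euc n → ℝ) =ᵐ[mu ψ] LL ψ u}
  add_mem' := by
    rintro F G ⟨u, hu, huc, hF⟩ ⟨v, hv, hvc, hG⟩
    refine ⟨fun x => u x + v x, hu.add hv, huc.add hvc, ?_⟩
    filter_upwards [hF, hG, Lp.coeFn_add F G] with x h1 h2 h3
    rw [h3, Pi.add_apply, h1, h2, LL_add hu hv]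
  zero_mem' := by
    refine ⟨fun _ => 0, contDiff_const, HasCompactSupport.zero, ?_⟩
    filter_upwards [Lp.coeFn_zero ℝ 2 (mu ψ)] with x h
    rw [h, LL_zero]
    · rfl
    · simp [tsupport]
  smul_mem' := by
    rintro c F ⟨u, hu, huc, hF⟩
    refine ⟨fun x => c * u x, contDiff_const.mul hu, huc.mul_left, ?_⟩
    filter_upwards [hF, Lp.coeFn_smul c F] with x h1 h2
    rw [h2, Pi.smul_apply, h1, LL_cmul hu]; rfl

lemma memLp_mu_iff {ψ f : Euc n → ℝ} (hψ : Continuous ψ) (hf : AEStronglyMeasurable f volume) :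
    MemLp f 2 (mu ψ) ↔ MemLp (fun x => f x * Real.exp (-ψ x / 2)) 2 volume := by
  have hf' : AEStronglyMeasurable f (mu ψ) := hf.mono_ac (mu_ac ψ)
  have hc : Continuous (fun x => Real.exp (-ψ x / 2)) := by fun_prop
  have hm : AEStronglyMeasurable (fun x => f x * Real.exp (-ψ x / 2)) volume := hf.mul hc.aestronglyMeasurable
  rw [memLp_two_iff_integrable_sq hf', memLp_two_iff_integrable_sq hm, integrable_mu hψ]
  refine integrable_congr (Filter.Eventually.of_forall fun x => ?_)
  simp only [mul_pow]
  congr 1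
  rw [← Real.exp_nat_mul]; congr 1; push_cast; ring

instance mu_fin (ψ : Euc n → ℝ) [IsProbabilityMeasure (mu ψ)] : IsFiniteMeasureOnCompacts (mu ψ) := inferInstance

lemma dense_LL {ψ f : Euc n → ℝ} (hψ : ContDiff ℝ ∞ ψ) [IsProbabilityMeasure (mu ψ)] (hf : MemLp f 2 (mu ψ))
    (h0 : ∫ x, f x ∂(mu ψ) = 0) {δ : ℝ} (hδ : 0 < δ) :
    ∃ u : Euc n → ℝ, ContDiff ℝ ∞ u ∧ HasCompactSupport u ∧ ∫ x, (f x + LL ψ u x) ^ 2 ∂(mu ψ) ≤ δ := by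
  have hψc := hψ.continuous
  have hmem : hf.toLp ∈ (KK ψ).topologicalClosure := by
    rw [← Submodule.orthogonal_orthogonal_eq_closure, Submodule.mem_orthogonal]
    intro h hh
    rw [Submodule.mem_orthogonal] at hh
    obtain ⟨c, hc⟩ := const_of_orth (h := h) hψ ((memLp_mu_iff hψc ((Lp.aestronglyMeasurable h).mono_ac (ac_mu hψc))).1 (Lp.memLp h)) (by
      intro u hu huc
      have hL : MemLp (LL ψ u) 2 (mu ψ) := (LL_sm hψ hu).continuous.memLp_of_hasCompactSupport (LL_cs huc)
      have := hh (hL.toLp) ⟨u, hu, huc, hL.coeFn_toLp⟩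
      rw [L2.inner_def] at this
      rw [← int_mu hψc, ← this]
      refine integral_congr_ae ?_
      filter_upwards [hL.coeFn_toLp] with x hx
      rw [hx]; simp)
    rw [L2.inner_def]
    have : ∫ x, inner ℝ (h x) ((hf.toLp f : Euc n → ℝ) x) ∂(mu ψ) = ∫ x, c * f x ∂(mu ψ) := by
      refine integral_congr_ae ?_
      filter_upwards [hf.coeFn_toLp, (mu_ac ψ).ae_le hc] with x hx hx2
      rw [hx, hx2]; simp [mul_comm]
    rw [this, integral_const_mul, h0, mul_zero]
  have hmem' : hf.toLp ∈ closure ((KK ψ : Submodule ℝ (Lp ℝ 2 (mu ψ))) : Set (Lp ℝ 2 (mu ψ))) := hmem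
  rw [Metric.mem_closure_iff] at hmem'
  obtain ⟨F, ⟨u, hu, huc, hF⟩, hd⟩ := hmem' (Real.sqrt δ) (Real.sqrt_pos.2 hδ)
  refine ⟨fun x => (-1:ℝ) * u x, contDiff_const.mul hu, huc.mul_left, ?_⟩
  rw [dist_eq_norm] at hd
  have h1 : ∫ x, (f x + LL ψ (fun x => (-1:ℝ) * u x) x) ^ 2 ∂(mu ψ) = ‖hf.toLp - F‖ ^ 2 := by
    rw [← real_inner_self_eq_norm_sq, L2.inner_def]
    refine integral_congr_ae ?_
    filter_upwards [hF, hf.coeFn_toLp, Lp.coeFn_sub hf.toLp F] with x h1 h2 h3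
    rw [h3, Pi.sub_apply, h1, h2, LL_cmul hu]
    simp; ring
  rw [h1, ← Real.sq_sqrt hδ.le]
  exact pow_le_pow_left₀ (norm_nonneg _) hd.le 2

lemma ibp_lip {ψ f u : Euc n → ℝ} {D : NNReal} (hψ : ContDiff ℝ ∞ ψ) (hf : LipschitzWith D f) (hu : ContDiff ℝ ∞ u)
    (hc : HasCompactSupport u) :
    ∫ x, f x * LL ψ u x * Real.exp (-ψ x)
      = - ∫ x, (∑ i, pd i f x * pd i u x) * Real.exp (-ψ x) := by
  have hs : ∀ i, ContDiff ℝ ∞ (fun x => pd i u x * Real.exp (-ψ x)) := fun i => (pd_sm hu i).mul (sm_expneg hψ)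
  have hsc : ∀ i, HasCompactSupport (fun x => pd i u x * Real.exp (-ψ x)) := fun i => (pd_cs hc i).mul_right
  have e1 : ∀ x, f x * LL ψ u x * Real.exp (-ψ x)
      = ∑ i, f x * pd i (fun x => pd i u x * Real.exp (-ψ x)) x := by
    intro x
    simp_rw [pd_flux hψ hu]
    unfold LL
    rw [← Finset.mul_sum, ← Finset.sum_mul, mul_assoc]
  have e2 : ∀ x, (∑ i, pd i f x * pd i u x) * Real.exp (-ψ x) = ∑ i, pd i f x * (pd i u x * Real.exp (-ψ x)) := by
    intro x; rw [Finset.sum_mul]; refine Finset.sum_congr rfl fun i _ => by ring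
  have hmf : ∀ i, Measurable (pd i f) := fun i => measurable_fderiv_apply_const ℝ f _
  have hbf : ∀ i x, ‖pd i f x‖ ≤ D := fun i x => by
    refine ((fderiv ℝ f x).le_opNorm _).trans ?_
    have := norm_fderiv_le_of_lipschitz ℝ hf (x₀ := x)
    simpa using this
  simp_rw [e1, e2]
  rw [integral_finsetSum, integral_finsetSum, ← Finset.sum_neg_distrib]
  · refine Finset.sum_congr rfl fun i _ => ?_
    obtain ⟨E, hE⟩ := ContDiff.lipschitzWith_of_hasCompactSupport (hsc i) (hs i) (by simp)
    have := hf.integral_lineDeriv_mul_eq (μ := volume) hE (hsc i) (EuclideanSpace.single i (1:ℝ))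
    have h1 : ∫ x, lineDeriv ℝ f x (EuclideanSpace.single i (1:ℝ)) * (pd i u x * Real.exp (-ψ x))
        = ∫ x, pd i f x * (pd i u x * Real.exp (-ψ x)) := by
      refine integral_congr_ae ?_
      filter_upwards [hf.ae_differentiableAt (μ := volume)] with x hx
      rw [hx.lineDeriv_eq_fderiv]; rfl
    rw [← h1, this, ← integral_neg]
    refine integral_congr_ae (Filter.Eventually.of_forall fun x => ?_)
    simp only
    rw [(sm_diff (hs i) x).lineDeriv_eq_fderiv, map_neg]
    unfold pd
    ring
  · intro i _
    refine (int_cs (hs i).continuous (hsc i)).bdd_mul (hmf i).aestronglyMeasurable (Filter.Eventually.of_forall (hbf i))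
  · intro i _
    exact int_cs (hf.continuous.mul (pd_sm (hs i) i).continuous) (pd_cs (hsc i) i).mul_left

end ILich
end

noncomputable section
open scoped ContDiff
namespace ILich

variable {n : ℕ}

/-- The `L²` gradient bound. -/
def GB (ψ : Euc n → ℝ) (C : ℝ) : Prop := 0 < C ∧ ∀ u : Euc n → ℝ, ContDiff ℝ ∞ u → HasCompactSupport u →
  ∫ x, (∑ i, pd i u x ^ 2) * Real.exp (-ψ x) ≤ C * ∫ x, LL ψ u x ^ 2 * Real.exp (-ψ x)

lemma lip_pd_bound {f : Euc n → ℝ} {D : NNReal} (hf : LipschitzWith D f) (i : Fin n) (x : Euc n) : ‖pd i f x‖ ≤ D := by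
  refine ((fderiv ℝ f x).le_opNorm _).trans ?_
  have := norm_fderiv_le_of_lipschitz ℝ hf (x₀ := x)
  simpa using this

lemma dual {ψ f : Euc n → ℝ} {D : NNReal} {C : ℝ} (hψ : ContDiff ℝ ∞ ψ) [IsProbabilityMeasure (mu ψ)]
    (hC : GB ψ C) (hf : LipschitzWith D f) (hf2 : MemLp f 2 (mu ψ)) :
    ∫ x, f x ^ 2 ∂(mu ψ) - (∫ x, f x ∂(mu ψ)) ^ 2 ≤ C * ∫ x, ‖gradient f x‖ ^ 2 ∂(mu ψ) := by
  have hψc := hψ.continuous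
  obtain ⟨hC0, hC⟩ := hC
  have hfi : Integrable f (mu ψ) := hf2.integrable (by norm_num)
  set m := ∫ x, f x ∂(mu ψ) with hm
  have hf02 : MemLp (fun x => f x - m) 2 (mu ψ) := hf2.sub (memLp_const m)
  have hvar : ∫ x, (f x - m) ^ 2 ∂(mu ψ) = ∫ x, f x ^ 2 ∂(mu ψ) - m ^ 2 := by
    have e : ∀ x, (f x - m) ^ 2 = f x ^ 2 - 2 * m * f x + m ^ 2 := fun x => by ring
    simp_rw [e]
    have i1 : Integrable (fun x => f x ^ 2 - 2 * m * f x) (mu ψ) := hf2.integrable_sq.sub (hfi.const_mul _)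
    rw [integral_add i1 (integrable_const _), integral_sub hf2.integrable_sq (hfi.const_mul _), integral_const_mul, ← hm]
    simp; ring
  have h0 : ∫ x, (f x - m) ∂(mu ψ) = 0 := by
    rw [integral_sub hfi (integrable_const _), ← hm]; simp
  have hmf : ∀ i, Measurable (pd i f) := fun i => measurable_fderiv_apply_const ℝ f _
  have hgi : Integrable (fun x => ∑ i, pd i f x ^ 2) (mu ψ) := by
    refine integrable_finsetSum _ fun i _ => ?_
    refine Integrable.of_bound ((hmf i).pow_const 2).aestronglyMeasurable ((D:ℝ)^2) (Filter.Eventually.of_forall fun x => ?_)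
    rw [norm_pow]; exact pow_le_pow_left₀ (norm_nonneg _) (lip_pd_bound hf i x) 2
  rw [← hvar]
  simp_rw [← sum_pd_sq]
  refine le_of_forall_pos_le_add fun δ hδ => ?_
  obtain ⟨u, hu, huc, hd⟩ := dense_LL hψ hf02 h0 hδ
  have hLc := (LL_sm hψ hu).continuous
  have hL : MemLp (LL ψ u) 2 (mu ψ) := hLc.memLp_of_hasCompactSupport (LL_cs huc)
  have hlf : LipschitzWith D (fun x => f x - m) := by
    intro x y; simpa [edist_sub_right] using hf x y
  have hpdm : ∀ i x, pd i (fun x => f x - m) x = pd i f x := by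
    intro i x; unfold pd; rw [fderiv_sub_const]
  have hib := ibp_lip hψ hlf hu huc
  simp_rw [hpdm] at hib
  rw [← int_mu hψc, ← int_mu hψc] at hib
  have i1 : Integrable (fun x => (f x - m) * LL ψ u x) (mu ψ) := hf02.integrable_mul hL
  have i2 : Integrable (fun x => (f x - m + LL ψ u x) ^ 2) (mu ψ) := (hf02.add hL).integrable_sq
  have i3 := hL.integrable_sq
  have hpu : ∀ i, MemLp (pd i u) 2 (mu ψ) := fun i => (pd_sm hu i).continuous.memLp_of_hasCompactSupport (pd_cs huc i)
  have i4 : Integrable (fun x => ∑ i, pd i u x ^ 2) (mu ψ) := integrable_finsetSum _ fun i _ => (hpu i).integrable_sq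
  have e : ∀ x, (f x - m) ^ 2 = (f x - m + LL ψ u x) ^ 2 - 2 * ((f x - m) * LL ψ u x) - LL ψ u x ^ 2 := fun x => by ring
  have h1 : ∫ x, (f x - m) ^ 2 ∂(mu ψ) = ∫ x, (f x - m + LL ψ u x) ^ 2 ∂(mu ψ)
      + 2 * ∫ x, (∑ i, pd i f x * pd i u x) ∂(mu ψ) - ∫ x, LL ψ u x ^ 2 ∂(mu ψ) := by
    simp_rw [e]
    have i12 : Integrable (fun x => (f x - m + LL ψ u x) ^ 2 - 2 * ((f x - m) * LL ψ u x)) (mu ψ) := i2.sub (i1.const_mul _)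
    rw [integral_sub i12 i3, integral_sub i2 (i1.const_mul _), integral_const_mul, hib]; ring
  have h2 : 2 * ∫ x, (∑ i, pd i f x * pd i u x) ∂(mu ψ)
      ≤ C * ∫ x, (∑ i, pd i f x ^ 2) ∂(mu ψ) + C⁻¹ * ∫ x, (∑ i, pd i u x ^ 2) ∂(mu ψ) := by
    rw [← integral_const_mul, ← integral_const_mul, ← integral_const_mul, ← integral_add (hgi.const_mul _) (i4.const_mul _)]
    refine integral_mono_ae ?_ ((hgi.const_mul _).add (i4.const_mul _)) (Filter.Eventually.of_forall fun x => ?_)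
    · refine Integrable.const_mul (integrable_finsetSum _ fun i _ => ?_) _
      exact ((hpu i).integrable (by norm_num)).bdd_mul (hmf i).aestronglyMeasurable (Filter.Eventually.of_forall (lip_pd_bound hf i))
    · simp only
      rw [Finset.mul_sum, Finset.mul_sum, Finset.mul_sum, ← Finset.sum_add_distrib]
      refine Finset.sum_le_sum fun i _ => ?_
      have h : 0 ≤ C⁻¹ * (C * pd i f x - pd i u x) ^ 2 := by positivity
      have h' : C⁻¹ * (C * pd i f x - pd i u x) ^ 2 = C * pd i f x ^ 2 + C⁻¹ * pd i u x ^ 2 - 2 * (pd i f x * pd i u x) := by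
        field_simp; ring
      linarith
  have h3 : C⁻¹ * ∫ x, (∑ i, pd i u x ^ 2) ∂(mu ψ) ≤ ∫ x, LL ψ u x ^ 2 ∂(mu ψ) := by
    rw [int_mu hψc, int_mu hψc, inv_mul_le_iff₀ hC0]
    exact hC u hu huc
  linarith

lemma GB_base {ψ : Euc n → ℝ} {t : ℝ} (ht : 0 < t) (hψ : ContDiff ℝ ∞ ψ)
    (hH : ∀ x (v : Fin n → ℝ), t * ∑ i, v i ^ 2 ≤ ∑ j, ∑ i, pd j (pd i ψ) x * v i * v j) : GB ψ t⁻¹ := by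
  refine ⟨by positivity, fun u hu huc => ?_⟩
  have ce := (sm_expneg hψ).continuous
  rw [bochner hψ hu huc, ← mul_le_mul_iff_right₀ ht, ← mul_assoc, mul_inv_cancel₀ ht.ne', one_mul, ← integral_const_mul]
  have h1 : 0 ≤ ∑ j, ∫ x, (∑ i, pd i (pd j u) x ^ 2) * Real.exp (-ψ x) := Finset.sum_nonneg fun j _ =>
    integral_nonneg fun x => mul_nonneg (Finset.sum_nonneg fun i _ => sq_nonneg _) (Real.exp_pos _).le
  have h2 : ∫ x, t * ((∑ i, pd i u x ^ 2) * Real.exp (-ψ x))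
      ≤ ∫ x, (∑ j, ∑ i, pd j (pd i ψ) x * pd i u x * pd j u x) * Real.exp (-ψ x) := by
    refine integral_mono ?_ ?_ fun x => ?_
    · refine Integrable.const_mul (int_cs ((continuous_finsetSum _ fun i _ => (pd_sm hu i).continuous.pow 2).mul ce) ?_) _
      refine cs_of_zero huc fun x hx => ?_
      simp [pd_zero_of_notMem _ hx]
    · refine int_cs ((continuous_finsetSum _ fun j _ => continuous_finsetSum _ fun i _ => (((pd_sm (pd_sm hψ i) j).continuous).mul (pd_sm hu i).continuous).mul (pd_sm hu j).continuous).mul ce) ?_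
      refine cs_of_zero huc fun x hx => ?_
      simp [pd_zero_of_notMem _ hx]
    · simp only
      rw [← mul_assoc]
      exact mul_le_mul_of_nonneg_right (hH x (fun i => pd i u x)) (Real.exp_pos _).le
  linarith

lemma pd_coord (i j : Fin n) (x : Euc n) : pd i (fun x : Euc n => x j) x = if i = j then 1 else 0 := by
  have : (fun x : Euc n => x j) = (EuclideanSpace.proj j : Euc n →L[ℝ] ℝ) := rfl
  unfold pd
  rw [this, ContinuousLinearMap.fderiv]
  simp [eq_comm]

lemma coord_sm (j : Fin n) : ContDiff ℝ ∞ (fun x : Euc n => x j) :=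
  (EuclideanSpace.proj j : Euc n →L[ℝ] ℝ).contDiff

lemma GB_step {ψ : Euc n → ℝ} {t κ C : ℝ} (ht : 0 < t) (hκ0 : 0 ≤ κ) (hψ : ContDiff ℝ ∞ ψ) [IsProbabilityMeasure (mu ψ)]
    (hH : ∀ x (v : Fin n → ℝ), t * ∑ i, v i ^ 2 ≤ ∑ j, ∑ i, pd j (pd i ψ) x * v i * v j)
    (hx2 : ∀ i, MemLp (fun x : Euc n => x i) 2 (mu ψ))
    (hκ : ∀ b : Fin n → ℝ, ∫ x, (∑ i, b i * x i) ^ 2 ∂(mu ψ) - (∫ x, (∑ i, b i * x i) ∂(mu ψ)) ^ 2 ≤ κ * ∑ i, b i ^ 2)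
    (hC : GB ψ C) : GB ψ ((C + κ) / (1 + t * C)) := by
  have hψc := hψ.continuous
  have hC0 := hC.1
  refine ⟨by positivity, fun u hu huc => ?_⟩
  have ce := (sm_expneg hψ).continuous
  rw [← int_mu hψc, ← int_mu hψc]
  set G := ∫ x, (∑ i, pd i u x ^ 2) ∂(mu ψ) with hG
  set A := ∫ x, LL ψ u x ^ 2 ∂(mu ψ) with hA
  have hLc := (LL_sm hψ hu).continuous
  have hL : MemLp (LL ψ u) 2 (mu ψ) := hLc.memLp_of_hasCompactSupport (LL_cs huc)
  have hpu : ∀ i, MemLp (pd i u) 2 (mu ψ) := fun i => (pd_sm hu i).continuous.memLp_of_hasCompactSupport (pd_cs huc i)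
  set b : Fin n → ℝ := fun i => ∫ x, pd i u x ∂(mu ψ) with hb
  have hA0 : 0 ≤ A := integral_nonneg fun x => sq_nonneg _
  -- mean of the gradient
  have hB : ∑ i, b i ^ 2 ≤ κ * A := by
    set l : Euc n → ℝ := fun x => ∑ i, b i * x i with hl
    have hls : ContDiff ℝ ∞ l := ContDiff.sum fun i _ => contDiff_const.mul (coord_sm i)
    have hl2 : MemLp l 2 (mu ψ) := by
      have : l = ∑ i, (fun x : Euc n => b i * x i) := by ext x; simp [hl]
      exact memLp_finsetSum _ fun i _ => (hx2 i).const_mul (b i)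
    have hli : Integrable l (mu ψ) := hl2.integrable (by norm_num)
    have hpl : ∀ i x, pd i l x = b i := by
      intro i x
      rw [hl, pd_sum (u := fun i (x : Euc n) => b i * x i) _ (fun i => contDiff_const.mul (coord_sm i))]
      simp only
      simp_rw [pd_cmul (coord_sm _), pd_coord]
      simp
    set m := ∫ x, l x ∂(mu ψ) with hm
    have hlm : ContDiff ℝ ∞ (fun x => l x - m) := hls.sub contDiff_const
    have h1 := ibp hψ hlm hu (Or.inr huc)
    have hplm : ∀ i x, pd i (fun x => l x - m) x = b i := by
      intro i x; rw [← hpl i x]; unfold pd; rw [fderiv_sub_const]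
    simp_rw [hplm] at h1
    rw [← int_mu hψc, ← int_mu hψc, integral_finsetSum _ (fun i _ => ((hpu i).integrable (by norm_num)).const_mul _)] at h1
    simp_rw [integral_const_mul] at h1
    have hlm2 : MemLp (fun x => l x - m) 2 (mu ψ) := hl2.sub (memLp_const m)
    have h2 := cauchy_schwarz_int hlm2.integrable_sq hL.integrable_sq (hlm2.integrable_mul hL)
    have hvar : ∫ x, (l x - m) ^ 2 ∂(mu ψ) = ∫ x, l x ^ 2 ∂(mu ψ) - m ^ 2 := by
      have e : ∀ x, (l x - m) ^ 2 = l x ^ 2 - 2 * m * l x + m ^ 2 := fun x => by ring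
      simp_rw [e]
      have i1 : Integrable (fun x => l x ^ 2 - 2 * m * l x) (mu ψ) := hl2.integrable_sq.sub (hli.const_mul _)
      rw [integral_add i1 (integrable_const _), integral_sub hl2.integrable_sq (hli.const_mul _), integral_const_mul, ← hm]
      simp; ring
    have h3 := hκ b
    rw [hvar] at h2
    change (∫ x, (l x - m) * LL ψ u x ∂(mu ψ)) ^ 2 ≤ _ at h2
    rw [h1] at h2
    have h4 : (∑ i, b i ^ 2) ^ 2 ≤ κ * (∑ i, b i ^ 2) * A := by
      have e5 : ∑ i, b i * ∫ x, pd i u x ∂(mu ψ) = ∑ i, b i ^ 2 := Finset.sum_congr rfl fun i _ => by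
        rw [sq]
      rw [e5, neg_sq] at h2
      exact h2.trans (mul_le_mul_of_nonneg_right h3 hA0)
    have h5 : 0 ≤ ∑ i, b i ^ 2 := Finset.sum_nonneg fun i _ => sq_nonneg _
    rcases h5.eq_or_lt with h6 | h6
    · rw [← h6]; positivity
    · have : (∑ i, b i ^ 2) * (∑ i, b i ^ 2) ≤ (∑ i, b i ^ 2) * (κ * A) := by linarith [h4, sq (∑ i, b i ^ 2)]
      exact le_of_mul_le_mul_left this h6
  -- Bochner
  have hboch := bochner hψ hu huc
  rw [← int_mu hψc, ← int_mu hψc] at hboch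
  simp_rw [← int_mu hψc] at hboch
  have hH2 : t * G ≤ ∫ x, (∑ j, ∑ i, pd j (pd i ψ) x * pd i u x * pd j u x) ∂(mu ψ) := by
    rw [hG, ← integral_const_mul]
    refine integral_mono ?_ ?_ fun x => hH x (fun i => pd i u x)
    · exact Integrable.const_mul (integrable_finsetSum _ fun i _ => (hpu i).integrable_sq) _
    · rw [integrable_mu hψc]
      refine int_cs ((continuous_finsetSum _ fun j _ => continuous_finsetSum _ fun i _ => (((pd_sm (pd_sm hψ i) j).continuous).mul (pd_sm hu i).continuous).mul (pd_sm hu j).continuous).mul ce) ?_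
      refine cs_of_zero huc fun x hx => ?_
      simp [pd_zero_of_notMem _ hx]
  have hP : ∀ j, ∫ x, pd j u x ^ 2 ∂(mu ψ) - b j ^ 2 ≤ C * ∫ x, (∑ i, pd i (pd j u) x ^ 2) ∂(mu ψ) := by
    intro j
    obtain ⟨E, hE⟩ := ContDiff.lipschitzWith_of_hasCompactSupport (pd_cs huc j) (pd_sm hu j) (by simp)
    have := dual hψ hC hE (hpu j)
    simp_rw [← sum_pd_sq] at this
    exact this
  have hGs : G = ∑ j, ∫ x, pd j u x ^ 2 ∂(mu ψ) := integral_finsetSum _ fun i _ => (hpu i).integrable_sq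
  have hS : G - ∑ j, b j ^ 2 ≤ C * ∑ j, ∫ x, (∑ i, pd i (pd j u) x ^ 2) ∂(mu ψ) := by
    rw [hGs, ← Finset.sum_sub_distrib, Finset.mul_sum]
    exact Finset.sum_le_sum fun j _ => hP j
  rw [div_mul_eq_mul_div, le_div_iff₀ (by positivity)]
  have h8 : C * A = C * (∑ j, ∫ x, (∑ i, pd i (pd j u) x ^ 2) ∂(mu ψ))
    + C * ∫ x, (∑ j, ∑ i, pd j (pd i ψ) x * pd i u x * pd j u x) ∂(mu ψ) := by rw [← mul_add, hA, hboch]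
  have h9 := mul_le_mul_of_nonneg_left hH2 hC0.le
  nlinarith

theorem smooth_main {ψ : Euc n → ℝ} {t κ : ℝ} (ht : 0 < t) (hκ0 : 0 ≤ κ) (hψ : ContDiff ℝ ∞ ψ) [IsProbabilityMeasure (mu ψ)]
    (hH : ∀ x (v : Fin n → ℝ), t * ∑ i, v i ^ 2 ≤ ∑ j, ∑ i, pd j (pd i ψ) x * v i * v j)
    (hx2 : ∀ i, MemLp (fun x : Euc n => x i) 2 (mu ψ))
    (hκ : ∀ b : Fin n → ℝ, ∫ x, (∑ i, b i * x i) ^ 2 ∂(mu ψ) - (∫ x, (∑ i, b i * x i) ∂(mu ψ)) ^ 2 ≤ κ * ∑ i, b i ^ 2)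
    {f : Euc n → ℝ} {D : NNReal} (hf : LipschitzWith D f) (hf2 : MemLp f 2 (mu ψ)) :
    ∫ x, f x ^ 2 ∂(mu ψ) - (∫ x, f x ∂(mu ψ)) ^ 2 ≤ Real.sqrt (κ / t) * ∫ x, ‖gradient f x‖ ^ 2 ∂(mu ψ) := by
  set S := {C : ℝ | GB ψ C} with hS
  have hne : S.Nonempty := ⟨t⁻¹, GB_base ht hψ hH⟩
  have hbd : BddBelow S := ⟨0, fun C hC => hC.1.le⟩
  obtain ⟨C, -, hlim, hCS⟩ := exists_seq_tendsto_sInf hne hbd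
  have hs0 : 0 ≤ sInf S := Real.sInf_nonneg fun C hC => hC.1.le
  have h1 : sInf S * (1 + t * sInf S) ≤ sInf S + κ := by
    refine le_of_tendsto_of_tendsto' ((tendsto_const_nhds (x := sInf S)).mul ((tendsto_const_nhds (x := (1:ℝ))).add (hlim.const_mul t)))
      (hlim.add (tendsto_const_nhds (x := κ))) fun k => ?_
    have h2 := csInf_le hbd (show _ ∈ S from GB_step ht hκ0 hψ hH hx2 hκ (hCS k))
    have hp : 0 < 1 + t * C k := by have := (hCS k).1; positivity
    rwa [le_div_iff₀ hp] at h2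
  have h3 : sInf S ≤ Real.sqrt (κ / t) := by
    apply Real.le_sqrt_of_sq_le
    rw [le_div_iff₀ ht]; nlinarith
  have h4 : ∫ x, f x ^ 2 ∂(mu ψ) - (∫ x, f x ∂(mu ψ)) ^ 2 ≤ sInf S * ∫ x, ‖gradient f x‖ ^ 2 ∂(mu ψ) :=
    ge_of_tendsto' (hlim.mul_const _) fun k => dual hψ (hCS k) hf hf2
  exact h4.trans (mul_le_mul_of_nonneg_right h3 (integral_nonneg fun x => by positivity))

end ILich
end

noncomputable section
open scoped ContDiff
namespace ILich

variable {n : ℕ}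

lemma supp_convex {g : Euc n → ℝ} (hg : IsLogConcaveFun g) : Convex ℝ {x | 0 < g x} := by
  intro x hx y hy a b ha hb hab
  exact lt_of_lt_of_le (mul_pos (Real.rpow_pos_of_pos hx a) (Real.rpow_pos_of_pos hy b)) (hg.2 x y a b ha hb hab)

lemma log_concave {g : Euc n → ℝ} (hg : IsLogConcaveFun g) : ConcaveOn ℝ {x | 0 < g x} (fun x => Real.log (g x)) := by
  refine ⟨supp_convex hg, ?_⟩
  intro x hx y hy a b ha hb hab
  have h := hg.2 x y a b ha hb hab
  have hx' : 0 < g x := hx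
  have hy' : 0 < g y := hy
  have := Real.log_le_log (mul_pos (Real.rpow_pos_of_pos hx' a) (Real.rpow_pos_of_pos hy' b)) h
  rw [Real.log_mul (Real.rpow_pos_of_pos hx' a).ne' (Real.rpow_pos_of_pos hy' b).ne', Real.log_rpow hx', Real.log_rpow hy'] at this
  exact this

lemma int_nonempty {g : Euc n → ℝ} (hg : IsLogConcaveFun g) {w : Euc n → ℝ}
    (hμ : volume.withDensity (fun x => ENNReal.ofReal (w x * g x)) ≠ 0) : (interior {x | 0 < g x}).Nonempty := by
  by_contra hne
  rw [Set.not_nonempty_iff_eq_empty] at hne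
  apply hμ
  have h1 := (supp_convex hg).addHaar_frontier volume
  rw [frontier, hne, Set.sdiff_empty] at h1
  have h2 : volume {x | 0 < g x} = 0 := measure_mono_null subset_closure h1
  rw [withDensity_eq_zero_iff]
  · have : ∀ᵐ x ∂(volume : Measure (Euc n)), ¬ (0 < g x) := by
      rw [ae_iff]; simpa using h2
    filter_upwards [this] with x hx
    have : g x = 0 := le_antisymm (not_lt.1 hx) (hg.1 x)
    simp [this]
  · have : (fun x => ENNReal.ofReal (w x * g x)) =ᵐ[volume] fun _ => 0 := by
      have : ∀ᵐ x ∂(volume : Measure (Euc n)), ¬ (0 < g x) := by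
        rw [ae_iff]; simpa using h2
      filter_upwards [this] with x hx
      have : g x = 0 := le_antisymm (not_lt.1 hx) (hg.1 x)
      simp [this]
    exact aemeasurable_const.congr this.symm

lemma log_bound {g : Euc n → ℝ} (hg : IsLogConcaveFun g) (hne : (interior {x | 0 < g x}).Nonempty) :
    ∃ a B : ℝ, 0 ≤ B ∧ ∀ y, 0 < g y → Real.log (g y) ≤ a + B * ‖y‖ := by
  obtain ⟨x0, hx0⟩ := hne
  have hcon := log_concave hg
  have hcont : ContinuousAt (fun x => Real.log (g x)) x0 :=
    (hcon.continuousOn_interior).continuousAt (isOpen_interior.mem_nhds hx0)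
  have h1 : ∀ᶠ z in nhds x0, Real.log (g x0) - 1 < Real.log (g z) :=
    hcont.eventually (lt_mem_nhds (by linarith))
  have h2 : ∀ᶠ z in nhds x0, z ∈ {x | 0 < g x} := mem_interior_iff_mem_nhds.1 hx0
  obtain ⟨r, hr, hball⟩ := Metric.nhds_basis_closedBall.mem_iff.1 (h1.and h2)
  refine ⟨Real.log (g x0) + ‖x0‖ / r, 1 / r, by positivity, fun x hx => ?_⟩
  have key : Real.log (g x) ≤ Real.log (g x0) + ‖x - x0‖ / r := by
    by_cases hxx : x = x0
    · subst hxx; simp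
    have hd : 0 < ‖x - x0‖ := norm_pos_iff.2 (sub_ne_zero.2 hxx)
    set d := ‖x - x0‖ with hdd
    set z := x0 - (r / d) • (x - x0) with hz
    have hzb : z ∈ Metric.closedBall x0 r := by
      rw [mem_closedBall_iff_norm, hz, sub_sub_cancel_left, norm_neg, norm_smul, ← hdd, Real.norm_of_nonneg (by positivity)]
      rw [div_mul_cancel₀ _ hd.ne']
    obtain ⟨hz1, hz2⟩ := hball hzb
    have hc := hcon.2 hx hz2 (show (0:ℝ) ≤ r / (r + d) by positivity) (show (0:ℝ) ≤ d / (r + d) by positivity) (by field_simp)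
    have e : (r / (r + d)) • x + (d / (r + d)) • z = x0 := by
      rw [hz, smul_sub, smul_smul]
      have : d / (r + d) * (r / d) = r / (r + d) := by field_simp
      rw [this, smul_sub, add_sub, sub_sub_eq_add_sub, add_assoc, ← add_smul, add_sub_cancel_left, ← add_div]
      rw [add_comm d r, div_self (by positivity), one_smul]
    simp only [smul_eq_mul] at hc
    rw [e] at hc
    have h3 : d / (r + d) * (Real.log (g x0) - 1) ≤ d / (r + d) * Real.log (g z) := by
      gcongr
    have h4 : r / (r + d) * Real.log (g x) + d / (r + d) * (Real.log (g x0) - 1) ≤ Real.log (g x0) := by linarith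
    have h5 : r * Real.log (g x) + d * (Real.log (g x0) - 1) ≤ (r + d) * Real.log (g x0) := by
      have := mul_le_mul_of_nonneg_left h4 (by positivity : 0 ≤ r + d)
      refine le_trans (le_of_eq ?_) this
      field_simp
    rw [← sub_le_iff_le_add', le_div_iff₀ hr]
    nlinarith
  have h6 : ‖x - x0‖ / r ≤ (‖x‖ + ‖x0‖) / r := by
    gcongr; exact norm_sub_le _ _
  rw [add_div] at h6
  have : 1 / r * ‖x‖ = ‖x‖ / r := by ring
  linarith

/-- sup-convolution of `log g` with a multiple of the norm. -/
def Lk (g : Euc n → ℝ) (k : ℝ) (x : Euc n) : ℝ := ⨆ y : {y : Euc n // 0 < g y}, (Real.log (g y) - k * ‖x - y‖)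

variable {g : Euc n → ℝ} {a B k : ℝ}

lemma Lk_term (hB : 0 ≤ B) (hb : ∀ y, 0 < g y → Real.log (g y) ≤ a + B * ‖y‖) (hk : B ≤ k) (x : Euc n)
    (y : {y : Euc n // 0 < g y}) : Real.log (g y) - k * ‖x - y‖ ≤ a + B * ‖x‖ := by
  have h1 := hb y y.2
  have h2 : ‖(y : Euc n)‖ ≤ ‖x‖ + ‖x - y‖ := by
    have := norm_sub_le x (x - (y : Euc n)); simpa using this
  have h3 := mul_le_mul_of_nonneg_left h2 hB
  have h4 := mul_le_mul_of_nonneg_right hk (norm_nonneg (x - (y : Euc n)))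
  linarith

lemma Lk_bdd (hB : 0 ≤ B) (hb : ∀ y, 0 < g y → Real.log (g y) ≤ a + B * ‖y‖) (hk : B ≤ k) (x : Euc n) :
    BddAbove (Set.range fun y : {y : Euc n // 0 < g y} => (Real.log (g y) - k * ‖x - y‖)) :=
  ⟨a + B * ‖x‖, by rintro _ ⟨y, rfl⟩; exact Lk_term hB hb hk x y⟩

lemma Lk_le (hne : Nonempty {y : Euc n // 0 < g y}) (hB : 0 ≤ B) (hb : ∀ y, 0 < g y → Real.log (g y) ≤ a + B * ‖y‖)
    (hk : B ≤ k) (x : Euc n) : Lk g k x ≤ a + B * ‖x‖ := ciSup_le (Lk_term hB hb hk x)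

lemma Lk_lip (hne : Nonempty {y : Euc n // 0 < g y}) (hB : 0 ≤ B) (hb : ∀ y, 0 < g y → Real.log (g y) ≤ a + B * ‖y‖)
    (hk : B ≤ k) (x x' : Euc n) : Lk g k x ≤ Lk g k x' + k * ‖x - x'‖ := by
  refine ciSup_le fun y => ?_
  have h1 := le_ciSup (Lk_bdd hB hb hk x') y
  have h2 : ‖x' - (y : Euc n)‖ ≤ ‖x - x'‖ + ‖x - y‖ := by
    have := norm_sub_le (x - (y : Euc n)) (x - x'); rw [sub_sub_sub_cancel_left] at this; linarith
  have h3 := mul_le_mul_of_nonneg_left h2 (hB.trans hk)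
  change _ ≤ Lk g k x' at h1
  linarith

lemma Lk_concave (hg : IsLogConcaveFun g) (hne : Nonempty {y : Euc n // 0 < g y}) (hB : 0 ≤ B)
    (hb : ∀ y, 0 < g y → Real.log (g y) ≤ a + B * ‖y‖)
    (hk : B ≤ k) : ConcaveOn ℝ Set.univ (Lk g k) := by
  refine ⟨convex_univ, fun x1 _ x2 _ p q hp hq hpq => ?_⟩
  refine le_of_forall_pos_le_add fun ε hε => ?_
  obtain ⟨y1, h1⟩ := exists_lt_of_lt_ciSup (show Lk g k x1 - ε < ⨆ y : {y : Euc n // 0 < g y}, (Real.log (g y) - k * ‖x1 - y‖) from by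
    change Lk g k x1 - ε < Lk g k x1; linarith)
  obtain ⟨y2, h2⟩ := exists_lt_of_lt_ciSup (show Lk g k x2 - ε < ⨆ y : {y : Euc n // 0 < g y}, (Real.log (g y) - k * ‖x2 - y‖) from by
    change Lk g k x2 - ε < Lk g k x2; linarith)
  have hc := (log_concave hg).2 y1.2 y2.2 hp hq hpq
  have hs : 0 < g (p • (y1 : Euc n) + q • (y2 : Euc n)) := supp_convex hg y1.2 y2.2 hp hq hpq
  have h3 := le_ciSup (Lk_bdd hB hb hk (p • x1 + q • x2)) ⟨_, hs⟩
  change _ ≤ Lk g k _ at h3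
  simp only [smul_eq_mul] at hc h3 ⊢
  have h4 : ‖p • x1 + q • x2 - (p • (y1 : Euc n) + q • (y2 : Euc n))‖ ≤ p * ‖x1 - y1‖ + q * ‖x2 - y2‖ := by
    have e : p • x1 + q • x2 - (p • (y1 : Euc n) + q • (y2 : Euc n)) = p • (x1 - y1) + q • (x2 - y2) := by
      rw [smul_sub, smul_sub]; abel
    rw [e]
    refine (norm_add_le _ _).trans ?_
    rw [norm_smul, norm_smul, Real.norm_of_nonneg hp, Real.norm_of_nonneg hq]
  have h5 := mul_le_mul_of_nonneg_left h4 (hB.trans hk)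
  have h6 := mul_le_mul_of_nonneg_left h1.le hp
  have h7 := mul_le_mul_of_nonneg_left h2.le hq
  have h8 : ε = p * ε + q * ε := by rw [← add_mul, hpq, one_mul]
  nlinarith

lemma Lk_tendsto (hg : IsLogConcaveFun g) (hne : Nonempty {y : Euc n // 0 < g y}) (hB : 0 ≤ B)
    (hb : ∀ y, 0 < g y → Real.log (g y) ≤ a + B * ‖y‖) {x : Euc n} (hx : ContinuousAt g x) :
    Filter.Tendsto (fun k => Real.exp (Lk g k x)) Filter.atTop (nhds (g x)) := by
  have lower : ∀ k, B ≤ k → g x ≤ Real.exp (Lk g k x) := by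
    intro k hk
    rcases (hg.1 x).eq_or_lt with h0 | h0
    · rw [← h0]; exact (Real.exp_pos _).le
    · have := le_ciSup (Lk_bdd hB hb hk x) ⟨x, h0⟩
      change _ ≤ Lk g k x at this
      simp only [sub_self, norm_zero, mul_zero, sub_zero] at this
      rw [← Real.exp_log h0]
      exact Real.exp_le_exp.2 this
  rw [Metric.tendsto_nhds]
  intro ε hε
  have hgx := hg.1 x
  obtain ⟨δ, hδ, hball⟩ := Metric.continuousAt_iff.1 hx (ε / 2) (by positivity)
  set q := Real.log (g x + ε / 2) with hq
  filter_upwards [Filter.eventually_ge_atTop B, Filter.eventually_ge_atTop (B + (a + B * ‖x‖ - q) / δ)] with k hk hk2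
  have hk3 : (a + B * ‖x‖ - q) ≤ (k - B) * δ := by
    rw [← div_le_iff₀ hδ]; linarith
  have upper : Lk g k x ≤ q := by
    refine ciSup_le fun y => ?_
    by_cases hy : dist (y : Euc n) x < δ
    · have h1 := hball hy
      rw [Real.dist_eq] at h1
      have h2 : g y ≤ g x + ε / 2 := by linarith [le_abs_self (g y - g x)]
      have h3 := Real.log_le_log y.2 h2
      have : 0 ≤ k * ‖x - y‖ := mul_nonneg (hB.trans hk) (norm_nonneg _)
      linarith
    · push Not at hy
      rw [dist_comm, dist_eq_norm] at hy
      have h1 := hb y y.2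
      have h2 : ‖(y : Euc n)‖ ≤ ‖x‖ + ‖x - y‖ := by
        have := norm_sub_le x (x - (y : Euc n)); simpa using this
      have h3 := mul_le_mul_of_nonneg_left h2 hB
      have h4 := mul_le_mul_of_nonneg_left hy (by linarith : 0 ≤ k - B)
      nlinarith
  have h5 : Real.exp (Lk g k x) ≤ g x + ε / 2 := by
    rw [← Real.exp_log (by positivity : 0 < g x + ε / 2)]
    exact Real.exp_le_exp.2 upper
  have h6 := lower k hk
  rw [Real.dist_eq, abs_lt]
  constructor <;> linarith

lemma g_cont_ae (hg : IsLogConcaveFun g) : ∀ᵐ x ∂(volume : Measure (Euc n)), ContinuousAt g x := by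
  have h1 := (supp_convex hg).addHaar_frontier volume
  have : ∀ᵐ x ∂(volume : Measure (Euc n)), x ∉ frontier {x | 0 < g x} := measure_eq_zero_iff_ae_notMem.1 h1
  filter_upwards [this] with x hx
  by_cases hxi : x ∈ interior {x | 0 < g x}
  · have h2 : ContinuousAt (fun x => Real.log (g x)) x :=
      ((log_concave hg).continuousOn_interior).continuousAt (isOpen_interior.mem_nhds hxi)
    have h3 : ContinuousAt (fun x => Real.exp (Real.log (g x))) x := h2.rexp
    refine h3.congr ?_
    filter_upwards [mem_interior_iff_mem_nhds.1 hxi] with y hy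
    exact Real.exp_log hy
  · have hxc : x ∉ closure {x | 0 < g x} := fun h => hx ⟨h, hxi⟩
    have : (closure {x | 0 < g x})ᶜ ∈ nhds x := isClosed_closure.isOpen_compl.mem_nhds hxc
    have h4 : (fun _ => (0:ℝ)) =ᶠ[nhds x] g := by
      filter_upwards [this] with y hy
      have : ¬ 0 < g y := fun h => hy (subset_closure h)
      exact (le_antisymm (not_lt.1 this) (hg.1 y)).symm
    exact continuousAt_const.congr h4

end ILich
end

noncomputable section
open scoped ContDiff
namespace ILich

variable {n : ℕ}

lemma fderiv_dir (u : Euc n → ℝ) (x : Euc n) (v : Fin n → ℝ) :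
    fderiv ℝ u x (∑ i, v i • EuclideanSpace.single i (1:ℝ)) = ∑ i, v i * pd i u x := by
  rw [map_sum]
  refine Finset.sum_congr rfl fun i _ => ?_
  rw [map_smul]; rfl

lemma deriv_line {u : Euc n → ℝ} (hu : ContDiff ℝ ∞ u) (x v : Euc n) (s : ℝ) :
    HasDerivAt (fun s : ℝ => u (x + s • v)) (fderiv ℝ u (x + s • v) v) s := by
  have h1 : HasDerivAt (fun s : ℝ => x + s • v) v s := by
    simpa using ((hasDerivAt_id s).smul_const v).const_add x
  exact (sm_diff hu (x + s • v)).hasFDerivAt.comp_hasDerivAt s h1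

lemma hess_nonneg {V : Euc n → ℝ} (hV : ContDiff ℝ ∞ V) (hc : ConvexOn ℝ Set.univ V) (x : Euc n) (v : Fin n → ℝ) :
    0 ≤ ∑ j, ∑ i, pd j (pd i V) x * v i * v j := by
  set v' : Euc n := ∑ i, v i • EuclideanSpace.single i (1:ℝ) with hv'
  have hDs : ContDiff ℝ ∞ (fun x => ∑ i, v i * pd i V x) := ContDiff.sum fun i _ => contDiff_const.mul (pd_sm hV i)
  have h1 : ∀ s, HasDerivAt (fun s : ℝ => V (x + s • v')) (∑ i, v i * pd i V (x + s • v')) s := by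
    intro s
    rw [← fderiv_dir]
    exact deriv_line hV x v' s
  have hcx : ConvexOn ℝ Set.univ (fun s : ℝ => V (x + s • v')) := by
    refine ⟨convex_univ, fun a _ b _ p q hp hq hpq => ?_⟩
    have := hc.2 (Set.mem_univ (x + a • v')) (Set.mem_univ (x + b • v')) hp hq hpq
    refine le_trans (le_of_eq ?_) this
    simp only
    congr 1
    simp only [smul_add, smul_smul, add_smul, smul_eq_mul]
    have : x = p • x + q • x := by rw [← add_smul, hpq, one_smul]
    nth_rewrite 1 [this]
    abel
  have hd : deriv (fun s : ℝ => V (x + s • v')) = fun s => ∑ i, v i * pd i V (x + s • v') := by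
    ext s; exact (h1 s).deriv
  have hmono : Monotone (deriv (fun s : ℝ => V (x + s • v'))) := by
    rw [← monotoneOn_univ]
    exact hcx.monotoneOn_deriv fun s _ => (h1 s).differentiableAt
  have h2 := hmono.deriv_nonneg (x := 0)
  rw [hd] at h2
  have h3 := deriv_line hDs x v' 0
  rw [h3.deriv, fderiv_dir, zero_smul, add_zero] at h2
  refine h2.trans (le_of_eq ?_)
  refine Finset.sum_congr rfl fun j _ => ?_
  rw [pd_sum (u := fun i x => v i * pd i V x) _ (fun i => contDiff_const.mul (pd_sm hV i)), Finset.mul_sum]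
  refine Finset.sum_congr rfl fun i _ => ?_
  rw [pd_cmul (pd_sm hV i)]; ring

lemma mol_comm (k φ : Euc n → ℝ) (x : Euc n) : mol k φ x = ∫ z, k (x - z) * φ z := by
  unfold mol
  rw [← integral_sub_left_eq_self _ _ x]
  simp

lemma mol_close {L : Euc n → ℝ} {k : ℝ} (hk : 0 ≤ k) (hc : Continuous L) (hL : ∀ x x', L x ≤ L x' + k * ‖x - x'‖)
    (φ : ContDiffBump (0 : Euc n)) (x : Euc n) : |mol L (φ.normed volume) x - L x| ≤ k * φ.rOut := by
  set p : Euc n → ℝ := φ.normed volume with hp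
  have ps : ContDiff ℝ ∞ p := φ.contDiff_normed
  have pcs : HasCompactSupport p := φ.hasCompactSupport_normed
  have p0 : ∀ x, 0 ≤ p x := fun x => φ.nonneg_normed x
  have p1 : ∫ x, p x = 1 := φ.integral_normed
  rw [mol_comm]
  have i1 : Integrable (fun z => L (x - z) * p z) :=
    int_cs ((hc.comp (continuous_const.sub continuous_id)).mul ps.continuous) pcs.mul_left
  have i2 : Integrable (fun z => L x * p z) := (int_cs ps.continuous pcs).const_mul _
  have e : (∫ z, L (x - z) * p z) - L x = ∫ z, (L (x - z) * p z - L x * p z) := by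
    rw [integral_sub i1 i2, integral_const_mul, p1, mul_one]
  rw [e]
  have hb : ∀ z, ‖L (x - z) * p z - L x * p z‖ ≤ (k * φ.rOut) * p z := by
    intro z
    rw [← sub_mul, norm_mul, Real.norm_of_nonneg (p0 z)]
    by_cases hz : p z = 0
    · simp [hz]
    have hz' : z ∈ Function.support (φ.normed (volume : Measure (Euc n))) := hz
    rw [φ.support_normed_eq, mem_ball_zero_iff] at hz'
    refine mul_le_mul_of_nonneg_right ?_ (p0 z)
    have h1 := hL (x - z) x
    have h2 := hL x (x - z)
    rw [sub_sub_cancel_left, norm_neg] at h1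
    rw [sub_sub_cancel] at h2
    have h3 := mul_le_mul_of_nonneg_left hz'.le hk
    rw [Real.norm_eq_abs, abs_le]; constructor <;> linarith
  have := norm_integral_le_of_norm_le ((int_cs ps.continuous pcs).const_mul (k * φ.rOut)) (Filter.Eventually.of_forall hb)
  rw [integral_const_mul, p1, mul_one] at this
  exact this

lemma mol_concave {L : Euc n → ℝ} (hc : Continuous L) (hL : ConcaveOn ℝ Set.univ L)
    (φ : ContDiffBump (0 : Euc n)) : ConcaveOn ℝ Set.univ (mol L (φ.normed volume)) := by
  set p : Euc n → ℝ := φ.normed volume with hp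
  have ps : ContDiff ℝ ∞ p := φ.contDiff_normed
  have pcs : HasCompactSupport p := φ.hasCompactSupport_normed
  have p0 : ∀ x, 0 ≤ p x := fun x => φ.nonneg_normed x
  have i1 : ∀ x, Integrable (fun z => L (x - z) * p z) := fun x =>
    int_cs ((hc.comp (continuous_const.sub continuous_id)).mul ps.continuous) pcs.mul_left
  refine ⟨convex_univ, fun x _ y _ a b ha hb hab => ?_⟩
  simp only [mol_comm, smul_eq_mul]
  rw [← integral_const_mul, ← integral_const_mul, ← integral_add ((i1 x).const_mul _) ((i1 y).const_mul _)]
  refine integral_mono (((i1 x).const_mul _).add ((i1 y).const_mul _)) (i1 _) fun z => ?_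
  simp only
  have h := hL.2 (Set.mem_univ (x - z)) (Set.mem_univ (y - z)) ha hb hab
  have e : a • (x - z) + b • (y - z) = a • x + b • y - z := by
    rw [smul_sub, smul_sub]
    have : z = a • z + b • z := by rw [← add_smul, hab, one_smul]
    nth_rewrite 3 [this]
    abel
  rw [e] at h
  simp only [smul_eq_mul] at h
  have := mul_le_mul_of_nonneg_right h (p0 z)
  linarith

/-- The approximating smooth concave functions. -/
lemma approx_exists {g : Euc n → ℝ} (hg : IsLogConcaveFun g) (hne : (interior {x | 0 < g x}).Nonempty) :
    ∃ (a B : ℝ) (L : ℕ → Euc n → ℝ), 0 ≤ B ∧ (∀ k, ContDiff ℝ ∞ (L k)) ∧ (∀ k, ConcaveOn ℝ Set.univ (L k)) ∧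
      (∀ k x, L k x ≤ a + B * ‖x‖) ∧
      ∀ᵐ x ∂(volume : Measure (Euc n)), Filter.Tendsto (fun k => Real.exp (L k x)) Filter.atTop (nhds (g x)) := by
  obtain ⟨a, B, hB, hb⟩ := log_bound hg hne
  have hn : Nonempty {y : Euc n // 0 < g y} := by
    obtain ⟨x, hx⟩ := hne
    have hx' : x ∈ {x | 0 < g x} := interior_subset hx
    exact ⟨⟨x, hx'⟩⟩
  set kk : ℕ → ℝ := fun k => B + k + 1 with hkk
  have hkB : ∀ k, B ≤ kk k := fun k => by simp only [hkk]; have : (0:ℝ) ≤ k := by positivity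
                                          linarith
  have hk1 : ∀ k, 1 ≤ kk k := fun k => by simp only [hkk]; have : (0:ℝ) ≤ k := by positivity
                                          linarith
  have hk0 : ∀ k, 0 < kk k := fun k => by linarith [hk1 k]
  let φ : ℕ → ContDiffBump (0 : Euc n) := fun k => ⟨1 / (kk k) ^ 2 / 2, 1 / (kk k) ^ 2, by have := hk0 k; positivity, by
    have : 0 < 1 / (kk k) ^ 2 := by have := hk0 k; positivity
    linarith⟩
  have hlip := fun k => Lk_lip hn hB hb (hkB k)
  have hcont : ∀ k, Continuous (Lk g (kk k)) := by
    intro k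
    have : LipschitzWith ⟨kk k, (hk0 k).le⟩ (Lk g (kk k)) := by
      refine LipschitzWith.of_le_add_mul _ fun x y => ?_
      rw [dist_eq_norm]; exact hlip k x y
    exact this.continuous
  have hclose : ∀ k x, |mol (Lk g (kk k)) ((φ k).normed volume) x - Lk g (kk k) x| ≤ 1 / kk k := by
    intro k x
    refine (mol_close (hk0 k).le (hcont k) (hlip k) (φ k) x).trans (le_of_eq ?_)
    show kk k * (1 / (kk k) ^ 2) = _
    have := (hk0 k).ne'
    field_simp
  refine ⟨a + 1, B, fun k => mol (Lk g (kk k)) ((φ k).normed volume), hB, fun k => ?_, fun k => ?_, fun k x => ?_, ?_⟩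
  · exact mol_sm (hcont k).locallyIntegrable (φ k).contDiff_normed (φ k).hasCompactSupport_normed
  · exact mol_concave (hcont k) (Lk_concave hg hn hB hb (hkB k)) (φ k)
  · have h1 := Lk_le hn hB hb (hkB k) x
    have h2 := (le_abs_self _).trans (hclose k x)
    have h3 : 1 / kk k ≤ 1 := by rw [div_le_one (hk0 k)]; exact hk1 k
    linarith
  · have hkt : Filter.Tendsto kk Filter.atTop Filter.atTop := by
      have : Filter.Tendsto (fun k : ℕ => (B + 1) + (k:ℝ)) Filter.atTop Filter.atTop :=
        Filter.tendsto_atTop_add_const_left _ _ tendsto_natCast_atTop_atTop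
      refine this.congr fun k => ?_
      simp only [hkk]; ring
    filter_upwards [g_cont_ae hg] with x hx
    have h1 := (Lk_tendsto hg hn hB hb hx).comp hkt
    have h2 : Filter.Tendsto (fun k => mol (Lk g (kk k)) ((φ k).normed volume) x - Lk g (kk k) x) Filter.atTop (nhds 0) := by
      refine squeeze_zero_norm (a := fun k => 1 / kk k) (fun k => hclose k x) ?_
      simp only [one_div]
      exact hkt.inv_tendsto_atTop
    have h3 := h1.mul ((Real.continuous_exp.tendsto 0).comp h2)
    rw [Real.exp_zero, mul_one] at h3
    refine h3.congr fun k => ?_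
    simp only [Function.comp]
    rw [← Real.exp_add]; congr 1; ring

end ILich
end

noncomputable section
open scoped ContDiff
namespace ILich

variable {n : ℕ}

lemma gauss_int {c : ℝ} (hc : 0 < c) : Integrable (fun x : Euc n => Real.exp (-c * ‖x‖ ^ 2)) := by
  have h := (GaussianFourier.integrable_cexp_neg_mul_sq_norm_add (V := Euc n) (b := (c:ℂ)) (by simpa using hc) 0 0).norm
  refine h.congr (Filter.Eventually.of_forall fun x => ?_)
  simp only [Complex.norm_exp]
  congr 1
  have : (-(c:ℂ) * (‖x‖:ℂ) ^ 2 + 0 * ((inner ℝ (0 : Euc n) x : ℝ) : ℂ)) = ((-c * ‖x‖ ^ 2 : ℝ) : ℂ) := by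
    push_cast; simp
  rw [this, Complex.ofReal_re]

lemma dom_bound {t a B s : ℝ} (ht : 0 < t) (hs : 0 ≤ s) :
    (1 + s) ^ 2 * (Real.exp (-t * s ^ 2 / 2) * Real.exp (a + B * s))
      ≤ 4 * Real.exp (a + (B + 1) ^ 2 / t) * Real.exp (-(t / 4) * s ^ 2) := by
  have h1 : (1 + s) ^ 2 ≤ 4 * Real.exp s := by
    have h2 := Real.add_one_le_exp (s / 2)
    have h3 : Real.exp s = Real.exp (s / 2) ^ 2 := by rw [← Real.exp_nat_mul]; congr 1; push_cast; ring
    rw [h3]; nlinarith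
  have h4 : (B + 1) * s ≤ t / 4 * s ^ 2 + (B + 1) ^ 2 / t := by
    have h6 : t / 4 * s ^ 2 + (B + 1) ^ 2 / t - (B + 1) * s = (t * s - 2 * (B + 1)) ^ 2 / (4 * t) := by
      field_simp; ring
    have : 0 ≤ (t * s - 2 * (B + 1)) ^ 2 / (4 * t) := by positivity
    linarith
  calc _ ≤ 4 * Real.exp s * (Real.exp (-t * s ^ 2 / 2) * Real.exp (a + B * s)) := by gcongr
    _ = 4 * Real.exp (s + (-t * s ^ 2 / 2 + (a + B * s))) := by rw [Real.exp_add s, Real.exp_add (-t * s ^ 2 / 2)]; ring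
    _ ≤ 4 * Real.exp (a + (B + 1) ^ 2 / t + (-(t / 4) * s ^ 2)) := by
      refine mul_le_mul_of_nonneg_left (Real.exp_le_exp.2 ?_) (by norm_num)
      nlinarith
    _ = _ := by rw [Real.exp_add]; ring

lemma lim_int {t a B K : ℝ} (ht : 0 < t) {L : ℕ → Euc n → ℝ} {g : Euc n → ℝ} (hg0 : ∀ x, 0 ≤ g x) (hgm : Measurable g)
    (hLc : ∀ k, Continuous (L k)) (hL : ∀ k x, L k x ≤ a + B * ‖x‖)
    (hlim : ∀ᵐ x, Filter.Tendsto (fun k : ℕ => Real.exp (L k x)) Filter.atTop (nhds (g x)))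
    {p : Euc n → ℝ} (hp : Measurable p) (hb : ∀ x, |p x| ≤ K * (1 + ‖x‖) ^ 2) :
    (∀ k, Integrable (fun x => p x * (Real.exp (-t * ‖x‖ ^ 2 / 2) * Real.exp (L k x)))) ∧
    Integrable (fun x => p x * (Real.exp (-t * ‖x‖ ^ 2 / 2) * g x)) ∧
    Filter.Tendsto (fun k => ∫ x, p x * (Real.exp (-t * ‖x‖ ^ 2 / 2) * Real.exp (L k x))) Filter.atTop
      (nhds (∫ x, p x * (Real.exp (-t * ‖x‖ ^ 2 / 2) * g x))) := by
  have hK : 0 ≤ K := by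
    have := (abs_nonneg _).trans (hb 0); simpa using this
  set F : Euc n → ℝ := fun x => K * (4 * Real.exp (a + (B + 1) ^ 2 / t) * Real.exp (-(t / 4) * ‖x‖ ^ 2)) with hF
  have hFi : Integrable F := ((gauss_int (by positivity)).const_mul _).const_mul _
  have key : ∀ (x : Euc n) (y : ℝ), 0 ≤ y → y ≤ Real.exp (a + B * ‖x‖) →
      ‖p x * (Real.exp (-t * ‖x‖ ^ 2 / 2) * y)‖ ≤ F x := by
    intro x y hy0 hy
    rw [norm_mul, Real.norm_eq_abs, Real.norm_of_nonneg (by positivity)]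
    calc _ ≤ K * (1 + ‖x‖) ^ 2 * (Real.exp (-t * ‖x‖ ^ 2 / 2) * Real.exp (a + B * ‖x‖)) := by
          gcongr; exact hb x
      _ ≤ _ := by
          rw [mul_assoc]
          exact mul_le_mul_of_nonneg_left (dom_bound ht (norm_nonneg x)) hK
  have hm1 : ∀ k, Measurable (fun x => p x * (Real.exp (-t * ‖x‖ ^ 2 / 2) * Real.exp (L k x))) := by
    intro k
    have := (hLc k).measurable
    fun_prop
  have hb1 : ∀ k x, ‖p x * (Real.exp (-t * ‖x‖ ^ 2 / 2) * Real.exp (L k x))‖ ≤ F x := fun k x =>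
    key x _ (Real.exp_pos _).le (Real.exp_le_exp.2 (hL k x))
  refine ⟨fun k => hFi.mono' (hm1 k).aestronglyMeasurable (Filter.Eventually.of_forall (hb1 k)), ?_, ?_⟩
  · refine hFi.mono' (by fun_prop) ?_
    filter_upwards [hlim] with x hx
    exact key x _ (hg0 x) (le_of_tendsto' hx fun k => Real.exp_le_exp.2 (hL k x))
  · refine tendsto_integral_of_dominated_convergence F (fun k => (hm1 k).aestronglyMeasurable) hFi
      (fun k => Filter.Eventually.of_forall (hb1 k)) ?_
    filter_upwards [hlim] with x hx
    exact (hx.const_mul _).const_mul _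

lemma cov_form (ν : Measure (Euc n)) [IsProbabilityMeasure ν] (hx2 : ∀ i, MemLp (fun x : Euc n => x i) 2 ν)
    (b : Fin n → ℝ) : ∫ x, (∑ i, b i * x i) ^ 2 ∂ν - (∫ x, (∑ i, b i * x i) ∂ν) ^ 2
      = ∑ i, ∑ j, b i * b j * covMatrix ν i j := by
  have h1 : ∀ i, Integrable (fun x : Euc n => x i) ν := fun i => (hx2 i).integrable (by norm_num)
  have h2 : ∀ i j, Integrable (fun x : Euc n => x i * x j) ν := fun i j => (hx2 i).integrable_mul (hx2 j)
  have e1 : ∫ x, (∑ i, b i * x i) ∂ν = ∑ i, b i * ∫ x, x i ∂ν := by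
    rw [integral_finsetSum _ fun i _ => (h1 i).const_mul _]
    simp_rw [integral_const_mul]
  have e2 : ∫ x, (∑ i, b i * x i) ^ 2 ∂ν = ∑ i, ∑ j, b i * b j * ∫ x, x i * x j ∂ν := by
    have : ∀ x : Euc n, (∑ i, b i * x i) ^ 2 = ∑ i, ∑ j, b i * b j * (x i * x j) := by
      intro x
      rw [sq, Finset.sum_mul_sum]
      refine Finset.sum_congr rfl fun i _ => Finset.sum_congr rfl fun j _ => by ring
    simp_rw [this]
    rw [integral_finsetSum _ fun i _ => integrable_finsetSum _ fun j _ => (h2 i j).const_mul _]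
    refine Finset.sum_congr rfl fun i _ => ?_
    rw [integral_finsetSum _ fun j _ => (h2 i j).const_mul _]
    simp_rw [integral_const_mul]
  rw [e1, e2, sq, Finset.sum_mul_sum, ← Finset.sum_sub_distrib]
  refine Finset.sum_congr rfl fun i _ => ?_
  rw [← Finset.sum_sub_distrib]
  refine Finset.sum_congr rfl fun j _ => ?_
  simp only [covMatrix, Matrix.of_apply]; ring

lemma form_eq_inner (M : Matrix (Fin n) (Fin n) ℝ) (a b : Euc n) :
    ∑ i, ∑ j, a i * b j * M i j = inner ℝ a (Matrix.toEuclideanCLM (𝕜 := ℝ) M b) := by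
  have : ∀ i, (Matrix.toEuclideanCLM (𝕜 := ℝ) M b) i = ∑ j, M i j * b j := by
    intro i
    simp [Matrix.ofLp_toEuclideanCLM, Matrix.mulVec, dotProduct]
  simp only [PiLp.inner_apply, this]
  refine Finset.sum_congr rfl fun i _ => ?_
  simp [Finset.sum_mul]
  refine Finset.sum_congr rfl fun j _ => by ring

lemma var_le (ν : Measure (Euc n)) [IsProbabilityMeasure ν] (hx2 : ∀ i, MemLp (fun x : Euc n => x i) 2 ν)
    (b : Fin n → ℝ) : ∫ x, (∑ i, b i * x i) ^ 2 ∂ν - (∫ x, (∑ i, b i * x i) ∂ν) ^ 2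
      ≤ opNorm (covMatrix ν) * ∑ i, b i ^ 2 := by
  rw [cov_form ν hx2 b]
  have h := form_eq_inner (covMatrix ν) (WithLp.toLp 2 b) (WithLp.toLp 2 b)
  simp only at h
  rw [h]
  have h2 : ∑ i, b i ^ 2 = ‖(WithLp.toLp 2 b : Euc n)‖ ^ 2 := by
    rw [EuclideanSpace.real_norm_sq_eq]
  rw [h2]
  refine (real_inner_le_norm _ _).trans ?_
  have := (Matrix.toEuclideanCLM (𝕜 := ℝ) (covMatrix ν)).le_opNorm (WithLp.toLp 2 b)
  unfold opNorm
  nlinarith [norm_nonneg (WithLp.toLp 2 b : Euc n)]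

lemma opNorm_cont : Continuous (opNorm : Matrix (Fin n) (Fin n) ℝ → ℝ) := by
  unfold opNorm
  refine Continuous.norm ?_
  exact LinearMap.continuous_of_finiteDimensional (Matrix.toEuclideanCLM (𝕜 := ℝ) (n := Fin n)).toAlgEquiv.toLinearEquiv.toLinearMap

lemma hess_quad {t c : ℝ} {V : Euc n → ℝ} (hV : ContDiff ℝ ∞ V) (hc : ConvexOn ℝ Set.univ V) (x : Euc n) (v : Fin n → ℝ) :
    t * ∑ i, v i ^ 2 ≤ ∑ j, ∑ i, pd j (pd i (fun x => (V x + c) + t / 2 * ‖x‖ ^ 2)) x * v i * v j := by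
  have hq : ∀ i, ContDiff ℝ ∞ (fun x : Euc n => x i * x i) := fun i => (coord_sm i).mul (coord_sm i)
  have hqs : ContDiff ℝ ∞ (fun x : Euc n => ∑ i, x i * x i) := ContDiff.sum fun i _ => hq i
  have e0 : (fun x : Euc n => (V x + c) + t / 2 * ‖x‖ ^ 2) = fun x => (V x + c) + t / 2 * ∑ i, x i * x i := by
    ext x; rw [EuclideanSpace.real_norm_sq_eq]; simp only [sq]
  have e1 : ∀ i, pd i (fun x : Euc n => (V x + c) + t / 2 * ‖x‖ ^ 2) = fun x => pd i V x + t * x i := by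
    intro i
    rw [e0, pd_add (hV.add contDiff_const) (contDiff_const.mul hqs), pd_add hV contDiff_const, pd_cmul hqs,
      pd_sum _ hq]
    ext x
    have : ∀ j, pd i (fun x : Euc n => x j * x j) x = 2 * (x j * if i = j then 1 else 0) := by
      intro j
      rw [pd_mul (coord_sm j) (coord_sm j)]
      simp only [pd_coord]; ring
    simp only [this]
    have h0 : pd i (fun _ : Euc n => c) x = 0 := by simp [pd]
    rw [h0, ← Finset.mul_sum]
    simp
    ring
  have e2 : ∀ i j, pd j (pd i (fun x : Euc n => (V x + c) + t / 2 * ‖x‖ ^ 2)) x = pd j (pd i V) x + t * if j = i then 1 else 0 := by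
    intro i j
    rw [e1, pd_add (pd_sm hV i) (contDiff_const.mul (coord_sm i)), pd_cmul (coord_sm i)]
    simp only [pd_coord]
  simp only [e2]
  have h := hess_nonneg hV hc x v
  have : ∑ j, ∑ i, (pd j (pd i V) x + t * if j = i then 1 else 0) * v i * v j
      = ∑ j, ∑ i, pd j (pd i V) x * v i * v j + t * ∑ i, v i ^ 2 := by
    rw [Finset.mul_sum, ← Finset.sum_add_distrib]
    refine Finset.sum_congr rfl fun j _ => ?_
    simp only [add_mul, Finset.sum_add_distrib]
    congr 1
    simp; ring
  rw [this]; linarith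

end ILich
end

noncomputable section
open scoped ContDiff
namespace ILich

variable {n : ℕ}

lemma mu_prob {ψ : Euc n → ℝ} (hi : Integrable (fun x => Real.exp (-ψ x)))
    (h1 : ∫ x, Real.exp (-ψ x) = 1) : IsProbabilityMeasure (mu ψ) := by
  constructor
  unfold mu
  rw [withDensity_apply _ MeasurableSet.univ, Measure.restrict_univ,
    ← ofReal_integral_eq_lintegral_ofReal hi (Filter.Eventually.of_forall fun x => (Real.exp_pos _).le), h1]
  simp

lemma coord_bound (x : Euc n) (i : Fin n) : |x i| ≤ ‖x‖ := by
  simpa using PiLp.norm_apply_le x i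

/-- Integration against the measure with density `e^{-t|x|²/2} g`. -/
lemma int_g {t : ℝ} {g : Euc n → ℝ} (hg0 : ∀ x, 0 ≤ g x) (hgm : Measurable g) (p : Euc n → ℝ) :
    ∫ x, p x ∂((volume : Measure (Euc n)).withDensity (fun x => ENNReal.ofReal (Real.exp (-t * ‖x‖ ^ 2 / 2) * g x)))
      = ∫ x, p x * (Real.exp (-t * ‖x‖ ^ 2 / 2) * g x) := by
  rw [integral_withDensity_eq_integral_toReal_smul (by fun_prop) (by simp)]
  refine integral_congr_ae (Filter.Eventually.of_forall fun x => ?_)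
  simp only [smul_eq_mul]
  rw [ENNReal.toReal_ofReal (mul_nonneg (Real.exp_pos _).le (hg0 x)), mul_comm]

lemma integrable_g {t : ℝ} {g : Euc n → ℝ} (hg0 : ∀ x, 0 ≤ g x) (hgm : Measurable g) {p : Euc n → ℝ} :
    Integrable p ((volume : Measure (Euc n)).withDensity (fun x => ENNReal.ofReal (Real.exp (-t * ‖x‖ ^ 2 / 2) * g x)))
      ↔ Integrable (fun x => p x * (Real.exp (-t * ‖x‖ ^ 2 / 2) * g x)) := by
  rw [integrable_withDensity_iff_integrable_smul' (by fun_prop) (by simp)]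
  refine integrable_congr (Filter.Eventually.of_forall fun x => ?_)
  simp only [smul_eq_mul]
  rw [ENNReal.toReal_ofReal (mul_nonneg (Real.exp_pos _).le (hg0 x)), mul_comm]

lemma meas_grad (f : Euc n → ℝ) : Measurable (fun x => ‖gradient f x‖ ^ 2) := by
  simp only [norm_grad]
  exact ((measurable_fderiv ℝ f).norm).pow_const 2

theorem lip_poincare {t : ℝ} (ht : 0 < t) {μ : Measure (Euc n)} [IsProbabilityMeasure μ]
    (h : UniformlyLogConcave t μ) :
    (∀ p : Euc n → ℝ, Measurable p → (∃ K, ∀ x, |p x| ≤ K * (1 + ‖x‖) ^ 2) → Integrable p μ) ∧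
    ∀ (f : Euc n → ℝ) (D : NNReal), LipschitzWith D f →
      ∫ x, f x ^ 2 ∂μ - (∫ x, f x ∂μ) ^ 2 ≤ Real.sqrt (opNorm (covMatrix μ) / t) * ∫ x, ‖gradient f x‖ ^ 2 ∂μ := by
  obtain ⟨g, hgm, hg, hμ⟩ := h
  have hne : (interior {x | 0 < g x}).Nonempty := by
    refine int_nonempty hg (w := fun x => Real.exp (-t * ‖x‖ ^ 2 / 2)) ?_
    rw [← hμ]; exact IsProbabilityMeasure.ne_zero μ
  obtain ⟨a, B, L, hB, hLs, hLc, hLb, hlim⟩ := approx_exists hg hne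
  have hg0 := hg.1
  have LI := fun {p : Euc n → ℝ} {K : ℝ} (hp : Measurable p) (hb : ∀ x, |p x| ≤ K * (1 + ‖x‖) ^ 2) =>
    lim_int ht hg0 hgm (fun k => (hLs k).continuous) hLb hlim hp hb
  have hintg : ∀ p : Euc n → ℝ, Measurable p → (∃ K, ∀ x, |p x| ≤ K * (1 + ‖x‖) ^ 2) → Integrable p μ := by
    rintro p hp ⟨K, hb⟩
    rw [hμ, integrable_g hg0 hgm]
    exact (LI hp hb).2.1
  refine ⟨hintg, ?_⟩
  -- the constant function
  obtain ⟨c1, c2, c3⟩ := LI (p := fun _ => (1:ℝ)) (K := 1) measurable_const (fun x => by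
    simp only [abs_one, one_mul]; nlinarith [norm_nonneg x])
  have hone : ∫ x, (1:ℝ) * (Real.exp (-t * ‖x‖ ^ 2 / 2) * g x) = 1 := by
    rw [← int_g hg0 hgm (fun _ => (1:ℝ)), ← hμ]; simp
  rw [hone] at c3
  set Z : ℕ → ℝ := fun k => ∫ x, (1:ℝ) * (Real.exp (-t * ‖x‖ ^ 2 / 2) * Real.exp (L k x)) with hZ
  have hZpos : ∀ k, 0 < Z k := by
    intro k
    refine (integral_pos_iff_support_of_nonneg (fun x => by positivity) (c1 k)).2 ?_
    have : Function.support (fun x : Euc n => (1:ℝ) * (Real.exp (-t * ‖x‖ ^ 2 / 2) * Real.exp (L k x))) = Set.univ := by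
      ext x; simp [Real.exp_ne_zero]
    rw [this]; exact (NeZero.pos _)
  set ψ : ℕ → Euc n → ℝ := fun k x => ((fun x => -L k x) x + Real.log (Z k)) + t / 2 * ‖x‖ ^ 2 with hψ
  have hψs : ∀ k, ContDiff ℝ ∞ (ψ k) := fun k =>
    (((hLs k).neg).add contDiff_const).add (contDiff_const.mul (contDiff_norm_sq ℝ))
  have hexp : ∀ k x, Real.exp (-ψ k x) = (Real.exp (-t * ‖x‖ ^ 2 / 2) * Real.exp (L k x)) / Z k := by
    intro k x
    simp only [hψ]
    rw [show -((-L k x + Real.log (Z k)) + t / 2 * ‖x‖ ^ 2) = (-t * ‖x‖ ^ 2 / 2 + L k x) - Real.log (Z k) by ring,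
      Real.exp_sub, Real.exp_log (hZpos k), Real.exp_add]
  have intk : ∀ k (p : Euc n → ℝ), ∫ x, p x ∂(mu (ψ k))
      = (∫ x, p x * (Real.exp (-t * ‖x‖ ^ 2 / 2) * Real.exp (L k x))) / Z k := by
    intro k p
    rw [int_mu (hψs k).continuous, ← integral_div]
    simp only [hexp, mul_div_assoc]
  have hprob : ∀ k, IsProbabilityMeasure (mu (ψ k)) := by
    intro k
    refine mu_prob ?_ ?_
    · simp only [hexp]
      simpa using (c1 k).div_const (Z k)
    · have := intk k (fun _ => 1)
      rw [int_mu (hψs k).continuous] at this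
      simp only [one_mul] at this ⊢
      rw [this]
      have h2 : Z k = ∫ x, (Real.exp (-t * ‖x‖ ^ 2 / 2) * Real.exp (L k x)) := by simp [hZ]
      rw [← h2]
      exact div_self (hZpos k).ne'
  have hintk : ∀ k (p : Euc n → ℝ), Measurable p → (∃ K, ∀ x, |p x| ≤ K * (1 + ‖x‖) ^ 2) → Integrable p (mu (ψ k)) := by
    rintro k p hp ⟨K, hb⟩
    rw [integrable_mu (hψs k).continuous]
    simp only [hexp, ← mul_div_assoc]
    exact ((LI hp hb).1 k).div_const _
  have hT : ∀ (p : Euc n → ℝ), Measurable p → (∃ K, ∀ x, |p x| ≤ K * (1 + ‖x‖) ^ 2) →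
      Filter.Tendsto (fun k => ∫ x, p x ∂(mu (ψ k))) Filter.atTop (nhds (∫ x, p x ∂μ)) := by
    rintro p hp ⟨K, hb⟩
    simp only [intk]
    rw [hμ, int_g hg0 hgm]
    have h3 := (LI hp hb).2.2.div c3 one_ne_zero
    rw [div_one] at h3
    exact h3
  have hcb : ∀ i, ∃ K, ∀ x : Euc n, |x i| ≤ K * (1 + ‖x‖) ^ 2 := fun i => ⟨1, fun x => by
    nlinarith [coord_bound x i, norm_nonneg x]⟩
  have hcb2 : ∀ i j, ∃ K, ∀ x : Euc n, |x i * x j| ≤ K * (1 + ‖x‖) ^ 2 := fun i j => ⟨1, fun x => by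
    rw [abs_mul]
    nlinarith [coord_bound x i, norm_nonneg x, coord_bound x j, abs_nonneg (x i), abs_nonneg (x j),
      mul_le_mul (coord_bound x i) (coord_bound x j) (abs_nonneg _) (norm_nonneg x)]⟩
  have hcm : ∀ i, Measurable (fun x : Euc n => x i) := fun i => (coord_sm i).continuous.measurable
  have hcov : Filter.Tendsto (fun k => covMatrix (mu (ψ k))) Filter.atTop (nhds (covMatrix μ)) := by
    refine tendsto_pi_nhds.2 fun i => tendsto_pi_nhds.2 fun j => ?_
    simp only [covMatrix, Matrix.of_apply]
    exact (hT _ ((hcm i).mul (hcm j)) (hcb2 i j)).sub ((hT _ (hcm i) (hcb i)).mul (hT _ (hcm j) (hcb j)))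
  have hop : Filter.Tendsto (fun k => Real.sqrt (opNorm (covMatrix (mu (ψ k))) / t)) Filter.atTop
      (nhds (Real.sqrt (opNorm (covMatrix μ) / t))) :=
    ((((opNorm_cont.tendsto _).comp hcov).div_const t)).sqrt
  intro f D hf
  have hfm : Measurable f := hf.continuous.measurable
  have hfb : ∀ x, |f x| ≤ (|f 0| + D) * (1 + ‖x‖) := by
    intro x
    have h1 := hf.dist_le_mul x 0
    rw [Real.dist_eq, dist_zero_right] at h1
    have h2 : |f x| ≤ |f x - f 0| + |f 0| := by
      have := abs_add_le (f x - f 0) (f 0); simpa using this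
    nlinarith [norm_nonneg x, abs_nonneg (f 0), D.coe_nonneg, mul_nonneg (abs_nonneg (f 0)) (norm_nonneg x)]
  have hE : 0 ≤ |f 0| + (D:ℝ) := by positivity
  have hfb1 : ∃ K, ∀ x, |f x| ≤ K * (1 + ‖x‖) ^ 2 := ⟨|f 0| + D, fun x => (hfb x).trans
    (mul_le_mul_of_nonneg_left (by nlinarith [norm_nonneg x]) hE)⟩
  have hfb2 : ∃ K, ∀ x, |f x ^ 2| ≤ K * (1 + ‖x‖) ^ 2 := ⟨(|f 0| + D) ^ 2, fun x => by
    rw [abs_pow, ← mul_pow]; exact pow_le_pow_left₀ (abs_nonneg _) (hfb x) 2⟩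
  have hgb : ∃ K, ∀ x, |‖gradient f x‖ ^ 2| ≤ K * (1 + ‖x‖) ^ 2 := ⟨(D:ℝ) ^ 2, fun x => by
    rw [abs_of_nonneg (by positivity), norm_grad]
    have h1 : ‖fderiv ℝ f x‖ ≤ D := norm_fderiv_le_of_lipschitz ℝ hf
    have h2 : ‖fderiv ℝ f x‖ ^ 2 ≤ (D:ℝ) ^ 2 := pow_le_pow_left₀ (norm_nonneg _) h1 2
    nlinarith [norm_nonneg x, sq_nonneg (D:ℝ), mul_nonneg (sq_nonneg (D:ℝ)) (norm_nonneg x),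
      mul_nonneg (sq_nonneg (D:ℝ)) (sq_nonneg ‖x‖)]⟩
  refine le_of_tendsto_of_tendsto' ((hT _ (hfm.pow_const 2) hfb2).sub ((hT _ hfm hfb1).pow 2))
    (hop.mul (hT _ (meas_grad f) hgb)) fun k => ?_
  have := hprob k
  have hx2 : ∀ i, MemLp (fun x : Euc n => x i) 2 (mu (ψ k)) := by
    intro i
    refine (memLp_two_iff_integrable_sq (hcm i).aestronglyMeasurable).2 ?_
    refine hintk k _ ((hcm i).pow_const 2) ?_
    simpa only [sq] using hcb2 i i
  refine smooth_main ht (norm_nonneg _) (hψs k) (fun x v => hess_quad (hLs k).neg (hLc k).neg x v) hx2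
    (fun b => var_le _ hx2 b) hf ?_
  exact (memLp_two_iff_integrable_sq hfm.aestronglyMeasurable).2 (hintk k _ (hfm.pow_const 2) hfb2)

end ILich
end

noncomputable section
open scoped ContDiff
namespace ILich

variable {n : ℕ}

lemma lip_cut {f χ : Euc n → ℝ} (hf : LocallyLipschitz f) (hχ : ContDiff ℝ ∞ χ) (hc : HasCompactSupport χ)
    (h0 : ∀ x, 0 ≤ χ x) (h1 : ∀ x, χ x ≤ 1) : ∃ D, LipschitzWith D (fun x => χ x * f x) := by
  obtain ⟨Lχ, hLχ⟩ := (hχ.of_le (m := 1) (by exact_mod_cast le_top)).lipschitzWith_of_hasCompactSupport hc one_ne_zero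
  obtain ⟨K, hK⟩ := (hf.locallyLipschitzOn (s := tsupport χ)).exists_lipschitzOnWith_of_compact hc
  obtain ⟨F, hF, hFe⟩ := hK.extend_real
  obtain ⟨A, hA⟩ := hc.exists_bound_of_continuousOn hf.continuous.continuousOn
  have hA' : ∀ x ∈ tsupport χ, |f x| ≤ |A| := fun x hx => (hA x hx).trans (le_abs_self A)
  refine ⟨Lχ * ⟨|A|, abs_nonneg A⟩ + K, LipschitzWith.of_dist_le_mul fun x y => ?_⟩
  have hev : ∀ x, χ x * f x = χ x * F x := by
    intro x
    by_cases hx : x ∈ tsupport χ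
    · rw [hFe hx]
    · rw [image_eq_zero_of_notMem_tsupport hx]; simp
  have key : ∀ x y, x ∈ tsupport χ → |χ x * f x - χ y * f y| ≤ (Lχ * |A| + K) * dist x y := by
    intro x y hx
    have e : χ x * f x - χ y * f y = (χ x - χ y) * f x + χ y * (F x - F y) := by
      rw [hev x, hev y, hFe hx]; ring
    have d1 : |χ x - χ y| ≤ Lχ * dist x y := by simpa [Real.dist_eq] using hLχ.dist_le_mul x y
    have d2 : |F x - F y| ≤ K * dist x y := by simpa [Real.dist_eq] using hF.dist_le_mul x y
    rw [e]
    refine (abs_add_le _ _).trans ?_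
    rw [abs_mul, abs_mul, abs_of_nonneg (h0 y)]
    have t1 : |χ x - χ y| * |f x| ≤ Lχ * dist x y * |A| :=
      mul_le_mul d1 (hA' x hx) (abs_nonneg _) (by positivity)
    have t2 : χ y * |F x - F y| ≤ 1 * (K * dist x y) := by
      gcongr; exact h1 y
    nlinarith
  have hcoe : ((Lχ * ⟨|A|, abs_nonneg A⟩ + K : NNReal) : ℝ) = Lχ * |A| + K := rfl
  rw [hcoe, Real.dist_eq]
  by_cases hx : x ∈ tsupport χ
  · exact key x y hx
  by_cases hy : y ∈ tsupport χ
  · rw [abs_sub_comm, dist_comm]; exact key y x hy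
  · rw [image_eq_zero_of_notMem_tsupport hx, image_eq_zero_of_notMem_tsupport hy]
    simp; positivity

lemma ae_diff {f : Euc n → ℝ} (hf : LocallyLipschitz f) : ∀ᵐ x : Euc n, DifferentiableAt ℝ f x := by
  have h : ∀ k : ℕ, ∀ᵐ x : Euc n, x ∈ Metric.closedBall (0 : Euc n) k →
      DifferentiableWithinAt ℝ f (Metric.closedBall (0 : Euc n) k) x := by
    intro k
    obtain ⟨K, hK⟩ := (hf.locallyLipschitzOn (s := Metric.closedBall (0 : Euc n) k)).exists_lipschitzOnWith_of_compact
      (isCompact_closedBall _ _)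
    exact hK.ae_differentiableWithinAt_of_mem
  filter_upwards [ae_all_iff.2 h] with x hx
  obtain ⟨k, hk⟩ := exists_nat_gt ‖x‖
  refine (hx k (by simpa using hk.le)).differentiableAt ?_
  refine Filter.mem_of_superset (Metric.isOpen_ball.mem_nhds ?_) Metric.ball_subset_closedBall
  simpa using hk

lemma poincare_all {μ : Measure (Euc n)} [IsProbabilityMeasure μ] (hac : μ ≪ volume) {C : ℝ} (hC : 0 ≤ C)
    (hP : ∀ (f : Euc n → ℝ) (D : NNReal), LipschitzWith D f →
      ∫ x, f x ^ 2 ∂μ - (∫ x, f x ∂μ) ^ 2 ≤ C * ∫ x, ‖gradient f x‖ ^ 2 ∂μ) : C ∈ poincareSet μ := by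
  refine ⟨hC, fun f hf hg => ?_⟩
  by_cases hi : Integrable (fun x => f x ^ 2) μ
  swap
  · rw [integral_undef hi]
    have h1 : 0 ≤ C * ∫ x, ‖gradient f x‖ ^ 2 ∂μ := mul_nonneg hC (integral_nonneg fun x => by positivity)
    nlinarith [sq_nonneg (∫ x, f x ∂μ)]
  obtain ⟨M, hM, hcut⟩ := cutoffs n
  have hR : ∀ k : ℕ, (1:ℝ) ≤ k + 1 := fun k => by
    have : (0:ℝ) ≤ k := k.cast_nonneg
    linarith
  choose χ hχs hχc hχ0 hχ1 hχe hχg using fun k : ℕ => hcut (k + 1) (hR k)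
  have hfc := hf.continuous
  have hfi : Integrable f μ :=
    ((memLp_two_iff_integrable_sq hfc.aestronglyMeasurable).2 hi).integrable (by norm_num)
  have hab : ∀ k x, |χ k x * f x| ≤ |f x| := by
    intro k x
    rw [abs_mul, abs_of_nonneg (hχ0 k x)]
    exact mul_le_of_le_one_left (abs_nonneg _) (hχ1 k x)
  have hev : ∀ x, ∀ᶠ k in Filter.atTop, (fun y => χ k y * f y) =ᶠ[nhds x] f := by
    intro x
    obtain ⟨N, hN⟩ := exists_nat_gt ‖x‖
    filter_upwards [Filter.eventually_ge_atTop N] with k hk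
    have hmem : Metric.ball (0 : Euc n) N ∈ nhds x := Metric.isOpen_ball.mem_nhds (by simpa using hN)
    filter_upwards [hmem] with y hy
    have hy' : ‖y‖ < N := by simpa using hy
    have hkN : (N:ℝ) ≤ k := by exact_mod_cast hk
    rw [hχe k y (by linarith), one_mul]
  have hlim0 : ∀ x, Filter.Tendsto (fun k => χ k x * f x) Filter.atTop (nhds (f x)) := fun x =>
    tendsto_const_nhds.congr' ((hev x).mono fun k hk => hk.self_of_nhds.symm)
  have T1 : Filter.Tendsto (fun k => ∫ x, χ k x * f x ∂μ) Filter.atTop (nhds (∫ x, f x ∂μ)) :=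
    tendsto_integral_of_dominated_convergence (fun x => |f x|)
      (fun k => ((hχs k).continuous.mul hfc).aestronglyMeasurable) hfi.abs
      (fun k => Filter.Eventually.of_forall (hab k)) (Filter.Eventually.of_forall hlim0)
  have T2 : Filter.Tendsto (fun k => ∫ x, (χ k x * f x) ^ 2 ∂μ) Filter.atTop (nhds (∫ x, f x ^ 2 ∂μ)) := by
    refine tendsto_integral_of_dominated_convergence (fun x => f x ^ 2)
      (fun k => (((hχs k).continuous.mul hfc).pow 2).aestronglyMeasurable) hi
      (fun k => Filter.Eventually.of_forall fun x => ?_) (Filter.Eventually.of_forall fun x => (hlim0 x).pow 2)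
    rw [Real.norm_of_nonneg (sq_nonneg _)]
    exact sq_le_sq.2 (hab k x)
  have T3 : Filter.Tendsto (fun k => ∫ x, ‖gradient (fun x => χ k x * f x) x‖ ^ 2 ∂μ) Filter.atTop
      (nhds (∫ x, ‖gradient f x‖ ^ 2 ∂μ)) := by
    refine tendsto_integral_of_dominated_convergence (fun x => 2 * ‖gradient f x‖ ^ 2 + 2 * M ^ 2 * f x ^ 2)
      (fun k => (meas_grad _).aestronglyMeasurable) ((hg.const_mul 2).add (hi.const_mul _)) (fun k => ?_)
      (Filter.Eventually.of_forall fun x => ?_)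
    · filter_upwards [hac.ae_le (ae_diff hf)] with x hx
      rw [Real.norm_of_nonneg (sq_nonneg _), norm_grad, norm_grad, fderiv_fun_mul (sm_diff (hχs k) x) hx]
      have b1 : ‖fderiv ℝ (χ k) x‖ ≤ M := by
        rw [← norm_grad]; exact (hχg k x).trans (div_le_self hM (hR k))
      have b2 : ‖χ k x • fderiv ℝ f x + f x • fderiv ℝ (χ k) x‖ ≤ ‖fderiv ℝ f x‖ + M * |f x| := by
        refine (norm_add_le _ _).trans ?_
        rw [norm_smul, norm_smul, Real.norm_of_nonneg (hχ0 k x), Real.norm_eq_abs]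
        have := mul_le_of_le_one_left (norm_nonneg (fderiv ℝ f x)) (hχ1 k x)
        nlinarith [mul_le_mul_of_nonneg_left b1 (abs_nonneg (f x))]
      have b3 := pow_le_pow_left₀ (norm_nonneg _) b2 2
      have b4 : |f x| ^ 2 = f x ^ 2 := sq_abs _
      nlinarith [sq_nonneg (‖fderiv ℝ f x‖ - M * |f x|)]
    · refine tendsto_const_nhds.congr' ((hev x).mono fun k hk => ?_)
      simp only [norm_grad]
      rw [hk.fderiv_eq]
  refine le_of_tendsto_of_tendsto' (T2.sub (T1.pow 2)) (T3.const_mul C) fun k => ?_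
  obtain ⟨D, hD⟩ := lip_cut hf (hχs k) (hχc k) (hχ0 k) (hχ1 k)
  exact hP _ D hD

lemma cov_le {μ : Measure (Euc n)} [IsProbabilityMeasure μ] {C : ℝ} (hC : 0 < C)
    (hx2 : ∀ i, MemLp (fun x : Euc n => x i) 2 μ)
    (hP : ∀ (f : Euc n → ℝ) (D : NNReal), LipschitzWith D f →
      ∫ x, f x ^ 2 ∂μ - (∫ x, f x ∂μ) ^ 2 ≤ C * ∫ x, ‖gradient f x‖ ^ 2 ∂μ) : opNorm (covMatrix μ) ≤ C := by
  set T := Matrix.toEuclideanCLM (𝕜 := ℝ) (covMatrix μ) with hT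
  have hq : ∀ b : Euc n, inner ℝ b (T b) = ∫ x, (∑ i, b i * x i) ^ 2 ∂μ - (∫ x, (∑ i, b i * x i) ∂μ) ^ 2 := by
    intro b
    rw [cov_form μ hx2 (fun i => b i), form_eq_inner]
  have hpos : ∀ b : Euc n, 0 ≤ inner ℝ b (T b) := by
    intro b
    rw [hq]
    have hm : MemLp (fun x : Euc n => ∑ i, b i * x i) 2 μ :=
      memLp_finsetSum _ fun i _ => (hx2 i).const_mul (b i)
    have h1 := ProbabilityTheory.variance_nonneg (fun x : Euc n => ∑ i, b i * x i) μ
    rw [ProbabilityTheory.variance_eq_sub hm] at h1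
    exact h1
  have hle : ∀ b : Euc n, inner ℝ b (T b) ≤ C * ‖b‖ ^ 2 := by
    intro b
    rw [hq]
    have hl : (fun x : Euc n => ∑ i, b i * x i) = innerSL ℝ b := by
      ext x
      simp [PiLp.inner_apply, mul_comm]
    have h1 := hP (fun x : Euc n => ∑ i, b i * x i) ‖innerSL ℝ b‖₊ (by rw [hl]; exact (innerSL ℝ b).lipschitz)
    have h2 : ∀ x, ‖gradient (fun x : Euc n => ∑ i, b i * x i) x‖ ^ 2 = ‖b‖ ^ 2 := by
      intro x
      rw [norm_grad, hl, ContinuousLinearMap.fderiv, innerSL_apply_norm]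
    simp only [h2] at h1
    simpa using h1
  have hsym : ∀ a b : Euc n, inner ℝ a (T b) = inner ℝ b (T a) := by
    intro a b
    rw [hT, ← form_eq_inner, ← form_eq_inner, Finset.sum_comm]
    refine Finset.sum_congr rfl fun i _ => Finset.sum_congr rfl fun j _ => ?_
    have : covMatrix μ j i = covMatrix μ i j := by
      simp only [covMatrix, Matrix.of_apply]
      simp_rw [mul_comm]
    rw [this]; ring
  unfold opNorm
  refine ContinuousLinearMap.opNorm_le_bound _ hC.le fun x => ?_
  have h0 := hpos (x - C⁻¹ • T x)
  rw [map_sub, map_smul, inner_sub_left, inner_sub_right, inner_sub_right, real_inner_smul_left, real_inner_smul_left,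
    real_inner_smul_right, real_inner_smul_right, hsym x (T x), real_inner_self_eq_norm_sq] at h0
  have h1 := hle x
  have h2 := hle (T x)
  have h3 : C⁻¹ * (C⁻¹ * inner ℝ (T x) (T (T x))) ≤ C⁻¹ * (C⁻¹ * (C * ‖T x‖ ^ 2)) := by gcongr
  have h4 : C⁻¹ * (C⁻¹ * (C * ‖T x‖ ^ 2)) = C⁻¹ * ‖T x‖ ^ 2 := by field_simp
  have h5 : C⁻¹ * ‖T x‖ ^ 2 ≤ C * ‖x‖ ^ 2 := by linarith
  have h6 : ‖T x‖ ^ 2 ≤ (C * ‖x‖) ^ 2 := by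
    have := mul_le_mul_of_nonneg_left h5 hC.le
    rw [← mul_assoc, mul_inv_cancel₀ hC.ne'] at this
    nlinarith
  exact (sq_le_sq₀ (norm_nonneg _) (by positivity)).1 h6

theorem final {t : ℝ} (ht : 0 < t) {μ : Measure (Euc n)} [IsProbabilityMeasure μ] (h : UniformlyLogConcave t μ) :
    poincareConst μ ≤ Real.sqrt (opNorm (covMatrix μ) / t) ∧
    Real.sqrt (opNorm (covMatrix μ) / t) ≤ 1 / t := by
  obtain ⟨hintg, hP⟩ := lip_poincare ht h
  have hac : μ ≪ volume := by
    obtain ⟨g, -, -, hμ⟩ := h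
    rw [hμ]; exact withDensity_absolutelyContinuous _ _
  refine ⟨csInf_le ⟨0, fun C hC => hC.1⟩ (poincare_all hac (Real.sqrt_nonneg _) hP), ?_⟩
  set κ := opNorm (covMatrix μ) with hκ
  have hκ0 : 0 ≤ κ := norm_nonneg _
  rcases hκ0.eq_or_lt with h0 | h0
  · rw [← h0]; simp [ht.le]
  have hx2 : ∀ i, MemLp (fun x : Euc n => x i) 2 μ := by
    intro i
    have hc : Continuous (fun x : Euc n => x i) := (coord_sm i).continuous
    refine (memLp_two_iff_integrable_sq hc.aestronglyMeasurable).2 (hintg _ (hc.pow 2).measurable ⟨1, fun x => ?_⟩)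
    have h1 := coord_bound x i
    rw [abs_pow, one_mul]
    exact pow_le_pow_left₀ (abs_nonneg _) (by linarith) 2
  have h1 := cov_le (Real.sqrt_pos.2 (div_pos h0 ht)) hx2 hP
  have h2 : κ ^ 2 ≤ κ / t := (Real.le_sqrt' h0).1 h1
  have h3 : κ ≤ 1 / t := by
    have : κ * κ ≤ κ * (1 / t) := by rw [← sq, mul_one_div]; exact h2
    exact le_of_mul_le_mul_left this h0
  rw [Real.sqrt_le_left (by positivity), sq]
  rw [div_eq_mul_one_div]
  gcongr

end ILich
end

/-- Improved log-concave Lichnerowicz inequality. -/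
theorem improved_lichnerowicz {n : ℕ} (t : ℝ) (ht : 0 < t) (μ : Measure (Euc n))
    [IsProbabilityMeasure μ] (h : UniformlyLogConcave t μ) :
    poincareConst μ ≤ Real.sqrt (opNorm (covMatrix μ) / t) ∧
    Real.sqrt (opNorm (covMatrix μ) / t) ≤ 1 / t := by
  exact ILich.final ht h
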